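/- arXiv:1607.08455 — 3 statements merged into one kernel-verified Lean document; each statement's English description precedes it below -/
import Mathlib

section
/- Let k be an odd positive integer, i a positive integer with gcd(i,k) = 1, t a natural number with 0 ≤ t ≤ k−1, e = (2^i + 1)·2^t, F = GaloisField 2 k, and α ∈ F with α ≠ 0 and α ≠ 1. Define V : F × F → F × F by V(x,y) = ((αx + y)^e + x^e, (x + αy)^e + y^e). Then for every (u,v) ∈ F × F with (u,v) ≠ (0,0) and every (a,b) ∈ F × F, the number of pairs (x,y) ∈ F × F satisfying V(x+u, y+v) + V(x,y) = (a,b) is at most 4. -/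
/-- The closed butterfly with branch size `k`, exponent `e` and coefficient `α`. -/
noncomputable def closedButterfly (k e : ℕ) (α : GaloisField 2 k) :
    GaloisField 2 k × GaloisField 2 k → GaloisField 2 k × GaloisField 2 k :=
  fun p => ((α * p.1 + p.2) ^ e + p.1 ^ e, (p.1 + α * p.2) ^ e + p.2 ^ e)

/-!
The exponent only enters through `x ^ e = τ (σ x * x)`, where `σ` and `τ` are iterates of the
Frobenius map. Since `τ` is additive and injective and `σ x * x` is quadratic, the solutions of the
differential equation in direction `w` form a coset of the kernel of an additive map, the polar map
`z ↦ M (σ z) + N z` of the butterfly at `w`, where `M` and `N` are `2 × 2` matrices.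

Both `z` and `w` lie in the kernel, so `det M * σ δ = det N * δ` for the determinant `δ` of the pair
`(z, w)`. If `det M` and `det N` do not both vanish, then at most two values of `δ` are possible,
because `σ` fixes only `0` and `1`. Each of them is attained by at most two `z`, since the multiples
of `w` in the kernel are `0` and `w`.

If `det M = det N = 0`, put `β = σ α` and `r = (α + β) / (α + β + α * β)`. Eliminating `w` shows
that `σ` fixes `r ^ 2 + r`. This element is not `0`, as that would mean `α = β` or `α * β = 0`.
It is not `1` either: `σ` permutes the roots of `X ^ 2 + X + 1`, so `σ ∘ σ` would fix the primitive
cube root of unity `r`, but `σ ∘ σ` fixes only `0` and `1`.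
-/

theorem encard_pair_le_two {A : Type*} (x y : A) : ({x, y} : Set A).encard ≤ 2 := by
  refine (Set.encard_insert_le {y} x).trans ?_
  rw [Set.encard_singleton, one_add_one_eq_two]

section AddGroup

variable {A B : Type*} [AddGroup A] [AddGroup B]

theorem encard_preimage_singleton_le_encard_ker (f : A →+ B) (b : B) :
    (f ⁻¹' {b}).encard ≤ (f.ker : Set A).encard := by
  rcases (f ⁻¹' {b}).eq_empty_or_nonempty with hempty | ⟨a, rfl⟩
  · simp [hempty]
  · exact (Set.encard_congr (f.fiberEquivKer a)).le

theorem encard_eq_encard_image_mul_encard_inter_ker (K : AddSubgroup A) (f : A →+ B) :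
    (K : Set A).encard = (f '' K).encard * (K ∩ f.ker : Set A).encard := by
  let g : K →+ B := f.comp K.subtype
  have card_eq : ENat.card K = ENat.card g.range * ENat.card g.ker := by
    rw [ENat.card_congr (AddSubgroup.addGroupEquivQuotientProdAddSubgroup (s := g.ker)),
      ENat.card_prod, ENat.card_congr (QuotientAddGroup.quotientKerEquivRange g).toEquiv]
  have range_eq : (g.range : Set B) = f '' K := by
    ext b; simp [g]
  have ker_eq : Subtype.val '' (g.ker : Set K) = (K ∩ f.ker : Set A) := by
    ext a; simp [g, AddMonoidHom.mem_ker, and_comm]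
  rw [← range_eq, ← ker_eq, Subtype.val_injective.encard_image]
  exact card_eq

end AddGroup

section CommRing

variable {F : Type*} [CommRing F]

/-- The closed butterfly whose branches apply an arbitrary function `f` in place of a power map. -/
def closedButterflyOf (f : F → F) (α : F) (p : F × F) : F × F :=
  (f (α * p.1 + p.2) + f p.1, f (p.1 + α * p.2) + f p.2)

/-- The Gold function of an endomorphism `σ`; it is `x ↦ x ^ (2 ^ i + 1)` when `σ` is the `i`-th
iterate of the Frobenius map in characteristic two. -/
def gold (σ : F →+* F) (x : F) : F :=
  σ x * x

/-- The polar map at `w` of the closed butterfly built on `gold σ`, that is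
`z ↦ V (z + w) - V z - V w`; see `closedButterflyOf_gold_add`. -/
def butterflyPolar (σ : F →+* F) (α : F) (w : F × F) : F × F →+ F × F where
  toFun z :=
    (σ (α * z.1 + z.2) * (α * w.1 + w.2) + σ (α * w.1 + w.2) * (α * z.1 + z.2)
      + (σ z.1 * w.1 + σ w.1 * z.1),
    σ (z.1 + α * z.2) * (w.1 + α * w.2) + σ (w.1 + α * w.2) * (z.1 + α * z.2)
      + (σ z.2 * w.2 + σ w.2 * z.2))
  map_zero' := by simp
  map_add' z z' := by
    ext <;> simp only [Prod.fst_add, Prod.snd_add, map_add, map_mul] <;> ring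

theorem closedButterflyOf_gold_add (σ : F →+* F) (α : F) (z w : F × F) :
    closedButterflyOf (gold σ) α (z + w)
      = closedButterflyOf (gold σ) α z + closedButterflyOf (gold σ) α w
        + butterflyPolar σ α w z := by
  ext <;> simp only [closedButterflyOf, gold, butterflyPolar, AddMonoidHom.coe_mk,
    ZeroHom.coe_mk, Prod.fst_add, Prod.snd_add, map_add, map_mul] <;> ring

theorem butterflyPolar_smul_self (σ : F →+* F) (α l : F) (w : F × F) :
    butterflyPolar σ α w (l • w) = (σ l + l) • closedButterflyOf (gold σ) α w := by
  ext <;> simp only [closedButterflyOf, gold, butterflyPolar, AddMonoidHom.coe_mk,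
    ZeroHom.coe_mk, Prod.smul_fst, Prod.smul_snd, smul_eq_mul, map_add, map_mul] <;> ring

/-- The determinant of the pair `(z, w)` of vectors in the plane, as an additive map of `z`. -/
def planeDet (w : F × F) : F × F →+ F where
  toFun z := z.1 * w.2 - z.2 * w.1
  map_zero' := by simp
  map_add' z z' := by simp only [Prod.fst_add, Prod.snd_add]; ring

/-- In characteristic two, with `a = α` and `b = σ α`, the determinant of the coefficients of
`(σ x, σ y)` in `butterflyPolar σ α (u, v) (x, y)`. The coefficients of `(x, y)` have the
determinant `polarDet (σ α) α (σ u) (σ v)`. -/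
def polarDet (a b u v : F) : F :=
  (b * (a * u + v) + u) * (b * (u + a * v) + v) + (a * u + v) * (u + a * v)

section CharTwo

variable [CharP F 2]

theorem polarDet_eq (a b u v : F) :
    polarDet a b u v = (a + b + a * b ^ 2) * (u + v) ^ 2 + (a + b + a * b) ^ 2 * (u * v) := by
  unfold polarDet
  grind

theorem polarDet_mul_map_planeDet {σ : F →+* F} {α : F} {z w : F × F}
    (hz : butterflyPolar σ α w z = 0) :
    polarDet α (σ α) w.1 w.2 * σ (planeDet w z)
      = polarDet (σ α) α (σ w.1) (σ w.2) * planeDet w z := by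
  obtain ⟨hz₁, hz₂⟩ := Prod.ext_iff.mp hz
  simp only [butterflyPolar, planeDet, polarDet, AddMonoidHom.coe_mk, ZeroHom.coe_mk,
    map_add, map_sub, map_mul, Prod.fst_zero, Prod.snd_zero] at hz₁ hz₂ ⊢
  -- Write the kernel equations of `z` and `w` as `M (σ z) = N z` and `M (σ w) = N w`. Then both
  -- sides are the determinant of the pair of images, and the image of `w` is
  -- `closedButterflyOf (gold σ) α w`, whose coordinates are the coefficients below.
  linear_combination
    (norm := (simp only [closedButterflyOf, gold, map_add, map_mul]; ring_nf; reduce_mod_char!))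
    (closedButterflyOf (gold σ) α w).2 * hz₁ + (closedButterflyOf (gold σ) α w).1 * hz₂

end CharTwo

end CommRing

section Field

variable {F : Type*} [Field F] {σ : F →+* F}

theorem exists_eq_smul_of_planeDet_eq_zero {z w : F × F} (hw : w ≠ 0)
    (hdet : planeDet w z = 0) : ∃ l : F, z = l • w := by
  obtain ⟨x, y⟩ := z
  obtain ⟨u, v⟩ := w
  have hxy : x * v - y * u = 0 := hdet
  by_cases hu : u = 0
  · have hv : v ≠ 0 := by rintro rfl; exact hw (by simp [hu])
    have hx : x = 0 := by simpa [hu, hv] using hxy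
    exact ⟨y / v, by ext <;> simp [hu, hv, hx]⟩
  · refine ⟨x / u, Prod.ext (by simp [hu]) ?_⟩
    simp only [Prod.smul_snd, smul_eq_mul]
    field_simp
    linear_combination -hxy

theorem encard_setOf_mul_map_eq_mul_le_two (hσ : ∀ x, σ x = x → x = 0 ∨ x = 1) {m n : F}
    (hmn : m ≠ 0 ∨ n ≠ 0) : {x | m * σ x = n * x}.encard ≤ 2 := by
  by_cases hex : ∃ x₀ ≠ 0, m * σ x₀ = n * x₀
  · obtain ⟨x₀, hx₀, h₀⟩ := hex
    have hσx₀ : σ x₀ ≠ 0 := (map_ne_zero σ).mpr hx₀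
    have hm : m ≠ 0 := fun hm ↦ by simp_all
    have hsub : {x | m * σ x = n * x} ⊆ {0, x₀} := by
      intro x hx
      have hfix : σ (x / x₀) = x / x₀ := by
        rw [map_div₀, div_eq_div_iff hσx₀ hx₀]
        apply mul_left_cancel₀ hm
        linear_combination x₀ * hx.out - x * h₀
      simpa [hx₀, div_eq_one_iff_eq] using hσ _ hfix
    exact (Set.encard_le_encard hsub).trans (encard_pair_le_two 0 x₀)
  · have hsub : {x | m * σ x = n * x} ⊆ {0} := fun x hx ↦ by_contra fun h ↦ hex ⟨x, h, hx⟩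
    exact (Set.encard_le_encard hsub).trans (by simp)

theorem eq_zero_or_one_of_map_eq_self (hσ : ∀ x, σ (σ x) = x → x = 0 ∨ x = 1) {x : F}
    (hx : σ x = x) : x = 0 ∨ x = 1 :=
  hσ x (by rw [hx, hx])

theorem eq_one_of_gold_eq_one (hσ : ∀ x, σ (σ x) = x → x = 0 ∨ x = 1) {x : F}
    (hx : gold σ x = 1) : x = 1 := by
  have hσx : σ x = x⁻¹ := eq_inv_of_mul_eq_one_left hx
  have hx₀ : x ≠ 0 := by rintro rfl; simp [gold] at hx
  exact (hσ x (by rw [hσx, map_inv₀, hσx, inv_inv])).resolve_left hx₀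

theorem gold_injective (hσ : ∀ x, σ (σ x) = x → x = 0 ∨ x = 1) :
    Function.Injective (gold σ) := by
  intro x y hxy
  by_cases hy : y = 0
  · simpa [gold, hy] using hxy
  · have hdiv : gold σ (x / y) = 1 := by
      have hgy : gold σ y ≠ 0 := mul_ne_zero ((map_ne_zero σ).mpr hy) hy
      have hdiv_eq : gold σ (x / y) = gold σ x / gold σ y := by
        simp only [gold, map_div₀, div_mul_div_comm]
      rw [hdiv_eq, hxy, div_self hgy]
    exact (div_eq_one_iff_eq hy).mp (eq_one_of_gold_eq_one hσ hdiv)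

theorem add_add_mul_map_ne_zero (hσ : ∀ x, σ (σ x) = x → x = 0 ∨ x = 1) {α : F}
    (hα0 : α ≠ 0) : α + σ α + α * σ α ≠ 0 := by
  intro h
  have hgold : gold σ (α + 1) = 1 := by
    rw [gold, map_add, map_one]
    linear_combination h
  simpa [hα0] using eq_one_of_gold_eq_one hσ hgold

end Field

section CharTwo

variable {F : Type*} [Field F] [CharP F 2] {σ : F →+* F} {α : F}

theorem sq_add_self_ne_one (hσ : ∀ x, σ (σ x) = x → x = 0 ∨ x = 1) (x : F) :
    x ^ 2 + x ≠ 1 := by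
  intro hx
  have hσx : σ x ^ 2 + σ x = 1 := by simpa using congrArg σ hx
  have hroots : σ x = x ∨ σ x = x + 1 := by grind
  have hfix : σ (σ x) = x := by
    rcases hroots with h | h <;> simp [h, CharTwo.add_cancel_right]
  rcases hσ x hfix with rfl | rfl <;> grind

theorem closedButterflyOf_gold_eq_zero (hσ : ∀ x, σ (σ x) = x → x = 0 ∨ x = 1) (hα0 : α ≠ 0)
    {w : F × F} (hw : closedButterflyOf (gold σ) α w = 0) : w = 0 := by
  obtain ⟨u, v⟩ := w
  have hu : α * u + v = u := gold_injective hσ (CharTwo.add_eq_zero.mp (congrArg Prod.fst hw))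
  have hv : u + α * v = v := gold_injective hσ (CharTwo.add_eq_zero.mp (congrArg Prod.snd hw))
  have hu0 : u = 0 := by grind
  have hv0 : v = 0 := by grind
  rw [hu0, hv0, Prod.mk_zero_zero]

theorem add_ne_zero_of_polarDet_eq_zero {a b u v : F} (hab : a + b + a * b ≠ 0)
    (huv : (u, v) ≠ 0) (hdet : polarDet a b u v = 0) : u + v ≠ 0 := by
  intro h
  obtain rfl : u = v := CharTwo.add_eq_zero.mp h
  rw [polarDet_eq, h] at hdet
  exact huv (by simpa [hab] using hdet)

theorem sq_mul_div_sq_of_polarDet_eq_zero {a b u v : F} (hab : a + b + a * b ≠ 0)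
    (huv : u + v ≠ 0) (hdet : polarDet a b u v = 0) :
    a ^ 2 * (u * v / (u + v) ^ 2)
      = ((a + b) / (a + b + a * b)) ^ 2 + (a + b) / (a + b + a * b) + a := by
  rw [polarDet_eq] at hdet
  field_simp
  grind

theorem map_sq_add_self_of_polarDet_eq_zero (hab : α + σ α + α * σ α ≠ 0) {u v : F}
    (huv : u + v ≠ 0) (hM : polarDet α (σ α) u v = 0)
    (hN : polarDet (σ α) α (σ u) (σ v) = 0) {r : F} (hr : r = (α + σ α) / (α + σ α + α * σ α)) :
    σ (r ^ 2 + r) = r ^ 2 + r := by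
  have hMr := sq_mul_div_sq_of_polarDet_eq_zero hab huv hM
  have hNr := sq_mul_div_sq_of_polarDet_eq_zero (by rwa [add_comm (σ α), mul_comm (σ α)])
    (by rwa [← map_add, map_ne_zero]) hN
  rw [add_comm (σ α), mul_comm (σ α), ← hr] at hNr
  rw [← hr] at hMr
  apply add_right_cancel (b := σ α)
  rw [← hNr, ← map_add, ← hMr]
  simp only [map_mul, map_pow, map_div₀, map_add]

theorem polarDet_ne_zero_or_polarDet_map_ne_zero (hσ : ∀ x, σ (σ x) = x → x = 0 ∨ x = 1)
    (hα0 : α ≠ 0) (hα1 : α ≠ 1) {w : F × F} (hw : w ≠ 0) :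
    polarDet α (σ α) w.1 w.2 ≠ 0 ∨ polarDet (σ α) α (σ w.1) (σ w.2) ≠ 0 := by
  by_contra! ⟨hM, hN⟩
  have hab := add_add_mul_map_ne_zero hσ hα0
  have hfix := map_sq_add_self_of_polarDet_eq_zero hab
    (add_ne_zero_of_polarDet_eq_zero hab hw hM) hM hN rfl
  rcases eq_zero_or_one_of_map_eq_self hσ hfix with hzero | hone
  · have hσα : σ α ≠ α := fun h ↦
      (eq_zero_or_one_of_map_eq_self hσ h).elim hα0 hα1
    have hσα0 : σ α ≠ 0 := (map_ne_zero σ).mpr hα0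
    field_simp at hzero
    grind
  · exact sq_add_self_ne_one hσ _ hone

theorem eq_zero_or_eq_of_mem_ker_butterflyPolar_of_planeDet_eq_zero
    (hσ : ∀ x, σ (σ x) = x → x = 0 ∨ x = 1) (hα0 : α ≠ 0) {z w : F × F} (hw : w ≠ 0)
    (hz : butterflyPolar σ α w z = 0) (hdet : planeDet w z = 0) : z = 0 ∨ z = w := by
  obtain ⟨l, rfl⟩ := exists_eq_smul_of_planeDet_eq_zero hw hdet
  rw [butterflyPolar_smul_self, smul_eq_zero, CharTwo.add_eq_zero] at hz
  have hl : σ l = l :=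
    hz.resolve_right fun h ↦ hw (closedButterflyOf_gold_eq_zero hσ hα0 h)
  rcases eq_zero_or_one_of_map_eq_self hσ hl with rfl | rfl <;> simp

theorem encard_ker_butterflyPolar_le_four (hσ : ∀ x, σ (σ x) = x → x = 0 ∨ x = 1)
    (hα0 : α ≠ 0) (hα1 : α ≠ 1) {w : F × F} (hw : w ≠ 0) :
    ((butterflyPolar σ α w).ker : Set (F × F)).encard ≤ 4 := by
  set K := (butterflyPolar σ α w).ker
  have himage : (planeDet w '' K).encard ≤ 2 := by
    refine le_trans (Set.encard_le_encard ?_) (encard_setOf_mul_map_eq_mul_le_two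
      (fun _ ↦ eq_zero_or_one_of_map_eq_self hσ)
      (polarDet_ne_zero_or_polarDet_map_ne_zero hσ hα0 hα1 hw))
    rintro _ ⟨z, hz, rfl⟩
    exact polarDet_mul_map_planeDet hz
  have hker : (K ∩ (planeDet w).ker : Set (F × F)).encard ≤ 2 :=
    (Set.encard_le_encard fun _ hz ↦
      eq_zero_or_eq_of_mem_ker_butterflyPolar_of_planeDet_eq_zero hσ hα0 hw hz.1 hz.2).trans
      (encard_pair_le_two 0 w)
  calc (K : Set (F × F)).encard
      = (planeDet w '' K).encard * (K ∩ (planeDet w).ker : Set (F × F)).encard :=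
        encard_eq_encard_image_mul_encard_inter_ker K (planeDet w)
    _ ≤ 2 * 2 := mul_le_mul' himage hker
    _ = 4 := by norm_num

theorem closedButterfly_differential_uniformity_le_four_general
    (hσ : ∀ x, σ (σ x) = x → x = 0 ∨ x = 1) (τ : F →+ F) (hτ : Function.Injective τ)
    (hα0 : α ≠ 0) (hα1 : α ≠ 1) {w : F × F} (hw : w ≠ 0) (c : F × F) :
    {p | closedButterflyOf (τ ∘ gold σ) α (p + w)
      + closedButterflyOf (τ ∘ gold σ) α p = c}.encard ≤ 4 := by
  let τ₂ : F × F →+ F × F := τ.prodMap τ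
  have hτ₂ : Function.Injective τ₂ := hτ.prodMap hτ
  let V := closedButterflyOf (gold σ) α
  have hV : ∀ p, closedButterflyOf (τ ∘ gold σ) α p = τ₂ (V p) := fun p ↦ by
    ext <;> simp [closedButterflyOf, τ₂, V]
  have hderiv : ∀ p, V (p + w) + V p = V w + butterflyPolar σ α w p := fun p ↦ by
    linear_combination closedButterflyOf_gold_add σ α p w + V p * CharTwo.two_eq_zero (R := F × F)
  have hfiber : {p | closedButterflyOf (τ ∘ gold σ) α (p + w)
      + closedButterflyOf (τ ∘ gold σ) α p = c}
      = τ₂.comp (butterflyPolar σ α w) ⁻¹' {c - τ₂ (V w)} := by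
    ext p
    simp only [hV, ← map_add, hderiv, Set.mem_ofPred_eq, Set.mem_preimage, Set.mem_singleton_iff,
      AddMonoidHom.comp_apply, eq_sub_iff_add_eq']
  have hker : (τ₂.comp (butterflyPolar σ α w)).ker = (butterflyPolar σ α w).ker :=
    AddMonoidHom.ker_comp_of_injective _ _ hτ₂
  rw [hfiber]
  refine (encard_preimage_singleton_le_encard_ker _ _).trans ?_
  rw [hker]
  exact encard_ker_butterflyPolar_le_four hσ hα0 hα1 hw

end CharTwo

theorem pow_eq_self_of_coprime {M : Type*} [Monoid M] {p j k : ℕ} (hjk : j.Coprime k) {x : M}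
    (hj : x ^ p ^ j = x) (hk : x ^ p ^ k = x) : x ^ p = x := by
  have hperiodic : ∀ {n}, x ^ p ^ n = x → Function.IsPeriodicPt (· ^ p : M → M) n x := by
    intro n hn
    rwa [Function.IsPeriodicPt, Function.IsFixedPt, pow_iterate]
  have hgcd := (hperiodic hj).gcd (hperiodic hk)
  rwa [hjk.gcd_eq_one] at hgcd

section GaloisField

variable {k : ℕ}

theorem eq_zero_or_one_of_iterateFrobenius_iterateFrobenius_eq_self {i : ℕ} (hk : Odd k)
    (hik : i.Coprime k) {x : GaloisField 2 k}
    (hx : iterateFrobenius (GaloisField 2 k) 2 i (iterateFrobenius (GaloisField 2 k) 2 i x) = x) :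
    x = 0 ∨ x = 1 := by
  have hxi : x ^ 2 ^ (i + i) = x := by rwa [← iterateFrobenius_add_apply] at hx
  have hxk : x ^ 2 ^ k = x := by
    have := Fintype.ofFinite (GaloisField 2 k)
    rw [← GaloisField.card 2 k hk.pos.ne', Nat.card_eq_fintype_card]
    exact FiniteField.pow_card x
  have hcoprime : (i + i).Coprime k := by
    rw [← two_mul]
    exact Nat.Coprime.mul_left (Nat.coprime_two_left.mpr hk) hik
  exact eq_zero_or_one_of_sq_eq_self (pow_eq_self_of_coprime hcoprime hxi hxk)

theorem closedButterfly_eq_closedButterflyOf_gold (i t : ℕ) (α : GaloisField 2 k) :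
    closedButterfly k ((2 ^ i + 1) * 2 ^ t) α
      = closedButterflyOf
        ((iterateFrobenius (GaloisField 2 k) 2 t : GaloisField 2 k →+ GaloisField 2 k)
          ∘ gold (iterateFrobenius (GaloisField 2 k) 2 i)) α := by
  ext p <;> simp [closedButterfly, closedButterflyOf, gold, iterateFrobenius_def, pow_mul, pow_succ]

end GaloisField

/-- Theorem 3.2: the closed butterfly with `k` odd, `gcd(i,k) = 1`, exponent
`e = (2^i+1)·2^t` and coefficient `α ≠ 0, 1` has differential uniformity at most 4. -/
theorem closedButterfly_differential_uniformity_le_four (k i t : ℕ) (hk : Odd k)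
    (hkpos : 0 < k) (hipos : 0 < i) (hgcd : Nat.gcd i k = 1) (ht : t ≤ k - 1)
    (α : GaloisField 2 k) (hα0 : α ≠ 0) (hα1 : α ≠ 1)
    (u v a b : GaloisField 2 k) (huv : (u, v) ≠ (0, 0)) :
    Set.ncard {p : GaloisField 2 k × GaloisField 2 k |
      closedButterfly k ((2 ^ i + 1) * 2 ^ t) α (p.1 + u, p.2 + v)
        + closedButterfly k ((2 ^ i + 1) * 2 ^ t) α p = (a, b)} ≤ 4 := by
  rw [closedButterfly_eq_closedButterflyOf_gold]
  exact (Set.encard_le_coe_iff_finite_ncard_le.mp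
    (closedButterfly_differential_uniformity_le_four_general
      (fun _ ↦ eq_zero_or_one_of_iterateFrobenius_iterateFrobenius_eq_self hk hgcd)
      _ (iterateFrobenius (GaloisField 2 k) 2 t).injective hα0 hα1 huv (a, b))).2
end

section
/- Let k be an odd positive integer, i a positive integer with gcd(i,k) = 1, t a natural number with 0 ≤ t ≤ k−1, e = (2^i + 1)·2^t, F = GaloisField 2 k, and α ∈ F with α ≠ 0 and α ≠ 1. Define V : F × F → F × F by V(x,y) = ((αx + y)^e + x^e, (x + αy)^e + y^e), with components V₁, V₂. Then for all a, b, c, d ∈ F with (c,d) ≠ (0,0), the Walsh transform value W((a,b),(c,d)) = Σ_{x,y ∈ F} χ(Tr(c·V₁(x,y) + d·V₂(x,y) + a·x + b·y)) lies in the set {0, 2^k, −2^k, 2^(k+1), −2^(k+1)} of integers. -/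
noncomputable instance (k : ℕ) : Fintype (GaloisField 2 k) := Fintype.ofFinite _

/-- The absolute trace `Tr(x) = x + x^2 + ⋯ + x^(2^(k-1))` of `GaloisField 2 k`,
computed inside the field (its values lie in the prime subfield `{0, 1}`). -/
noncomputable def absTrace (k : ℕ) (x : GaloisField 2 k) : GaloisField 2 k :=
  ∑ j ∈ Finset.range k, x ^ 2 ^ j

/-- The Walsh transform `W((a,b),(c,d)) = Σ_{x,y} χ(Tr(c·V₁(x,y) + d·V₂(x,y) + ax + by))`
of the closed butterfly `V(x,y) = ((αx+y)^e + x^e, (x+αy)^e + y^e)`, where `χ(0) = 1`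
and `χ(1) = -1`. -/
noncomputable def butterflyWalsh (k e : ℕ) (α a b c d : GaloisField 2 k) : ℤ :=
  haveI := Classical.decEq (GaloisField 2 k)
  ∑ x : GaloisField 2 k, ∑ y : GaloisField 2 k,
    if absTrace k (c * ((α * x + y) ^ e + x ^ e) + d * ((x + α * y) ^ e + y ^ e)
        + a * x + b * y) = 0 then 1 else -1

/-!
Write `e = (2 ^ i + 1) * 2 ^ t` and let `σ` be the `i`-th power of Frobenius. Since the trace is
Frobenius invariant, the factor `2 ^ t` can be absorbed into `c` and `d`, and the Walsh value is the
sum over the plane of `(-1) ^ Tr q` with `q z = z ⬝ᵥ N *ᵥ σ z + ℓ ⬝ᵥ z` for a `2 × 2` matrix `N`.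
The square of such a sum is `|F| ^ 2` times a signed count over the radical of the polarization,
so it suffices that the radical, the solution set of `σ(N) σ²(h) + Nᵀ h = 0`, has at most four
elements.

As `k` is odd and `gcd i k = 1`, the fixed field of `σ²` is `{0, 1}`. If `N` is invertible, the
radical is where an injective linear map agrees with a `σ²`-semilinear one, hence an `𝔽₂`-space of
dimension at most two. If `N = u vᵀ` with `σ u` and `v` independent, the radical is trivial. What
remains is to exclude `N = μ u σ(u)ᵀ`. Scaling to `c = (1 + r) ^ 2`, `d = r ^ 2`, the vanishing of
`det N` and the ratios of the entries of `N` force `(r + σ r) * σ α = 1` or `α = 1`, and in the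
former case a norm-one argument gives `r + σ r = 1`, that is `α = 1` again.
-/

open Matrix

section SemilinearCoincidence

variable {F V W : Type*} [Field F] [AddCommGroup V] [Module F V] [AddCommGroup W] [Module F W]
  {τ : F →+* F} {f : V →ₛₗ[τ] W} {g : V →ₗ[F] W}

lemma map_coeff_eq_of_semilinear_eq_linear (hg : Function.Injective g) {ι : Type*} [Fintype ι]
    {b : ι → V} (hb : LinearIndependent F b) (hfb : ∀ j, f (b j) = g (b j)) {c : ι → F}
    (hc : f (∑ j, c j • b j) = g (∑ j, c j • b j)) (j : ι) : τ (c j) = c j := by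
  have hgb : LinearIndependent F (g ∘ b) := hb.map' g (LinearMap.ker_eq_bot.2 hg)
  have hsum : ∑ j, (τ (c j) - c j) • g (b j) = 0 := by
    simpa [hfb, sub_smul, sub_eq_zero] using hc
  exact sub_eq_zero.1 (Fintype.linearIndependent_iff.1 hgb _ hsum j)

theorem ncard_semilinear_eq_linear_le [FiniteDimensional F V] (hg : Function.Injective g)
    (hfin : {x | τ x = x}.Finite) :
    {v | f v = g v}.ncard ≤ {x | τ x = x}.ncard ^ Module.finrank F V := by
  obtain ⟨b, hbS, hspan, hb⟩ := exists_linearIndependent F {v | f v = g v}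
  have := hb.setFinite.fintype
  have := hfin.to_subtype
  have hsub : {v | f v = g v} ⊆
      Set.range fun c : b → {x | τ x = x} ↦ ∑ j, (c j : F) • (j : V) := by
    intro v hv
    have hvb : v ∈ Submodule.span F (Set.range ((↑) : b → V)) := by
      rw [Subtype.range_coe, hspan]
      exact Submodule.subset_span hv
    obtain ⟨c, rfl⟩ := Submodule.mem_span_range_iff_exists_fun F |>.1 hvb
    exact ⟨fun j ↦ ⟨c j, map_coeff_eq_of_semilinear_eq_linear hg hb (fun j ↦ hbS j.2) hv j⟩, rfl⟩
  calc {v | f v = g v}.ncard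
      ≤ Nat.card (b → {x | τ x = x}) :=
        (Set.ncard_le_ncard hsub (Set.finite_range _)).trans (Finite.card_range_le _)
    _ = {x | τ x = x}.ncard ^ Fintype.card b := by
        rw [Nat.card_fun, Nat.card_coe_set_eq, Nat.card_eq_fintype_card]
    _ ≤ {x | τ x = x}.ncard ^ Module.finrank F V :=
        Nat.pow_le_pow_right ((Set.ncard_pos hfin).2 ⟨0, map_zero τ⟩) hb.fintype_card_le_finrank

end SemilinearCoincidence

section QuadraticCharacterSum

variable {G : Type*} [AddCommGroup G] [Fintype G] {g : G → ℤ} {B : G → AddChar G ℤ}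

theorem sq_sum_eq_card_mul_sum_radical [DecidableEq (AddChar G ℤ)] (hg : ∀ z, g z ^ 2 = 1)
    (hB : ∀ z h, g (z + h) = g z * g h * B h z) :
    (∑ z, g z) ^ 2 = Fintype.card G * ∑ h with B h = 0, g h := by
  calc (∑ z, g z) ^ 2 = ∑ z, ∑ h, g z * g (z + h) := by
        rw [sq, Finset.sum_mul_sum]
        exact Finset.sum_congr rfl fun z _ ↦
          (Equiv.sum_comp (Equiv.addLeft z) fun w ↦ g z * g w).symm
    _ = ∑ h, g h * ∑ z, B h z := by
        rw [Finset.sum_comm]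
        simp_rw [Finset.mul_sum]
        refine Finset.sum_congr rfl fun h _ ↦ Finset.sum_congr rfl fun z _ ↦ ?_
        rw [hB]
        linear_combination (g h * B h z) * hg z
    _ = Fintype.card G * ∑ h with B h = 0, g h := by
        simp [AddChar.sum_eq_ite, Finset.sum_filter, Finset.mul_sum, mul_comm]

lemma mem_of_sq_eq_sq_mul_of_le_four {m S R : ℤ} (hS : S ^ 2 = m ^ 2 * R) (hR : R ≤ 4) :
    S ∈ ({0, m, -m, 2 * m, -(2 * m)} : Set ℤ) := by
  obtain ⟨n, rfl⟩ : m ∣ S := by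
    rw [← Int.pow_dvd_pow_iff two_ne_zero, hS]
    exact dvd_mul_right _ _
  rcases eq_or_ne m 0 with rfl | hm
  · simp
  have hn : n ^ 2 = R := mul_left_cancel₀ (pow_ne_zero 2 hm) (by rw [← hS, mul_pow])
  obtain ⟨hlow, hupp⟩ : -2 ≤ n ∧ n ≤ 2 := abs_le.1 (abs_le_of_sq_le_sq (by omega) (by norm_num))
  interval_cases n <;> simp [mul_comm]

theorem sum_mem_of_ncard_radical_le_four {m : ℤ} (hcard : (Fintype.card G : ℤ) = m ^ 2)
    (hg : ∀ z, g z ^ 2 = 1) (hB : ∀ z h, g (z + h) = g z * g h * B h z)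
    (hrad : {h | B h = 0}.ncard ≤ 4) :
    ∑ z, g z ∈ ({0, m, -m, 2 * m, -(2 * m)} : Set ℤ) := by
  classical
  apply mem_of_sq_eq_sq_mul_of_le_four (R := ∑ h with B h = 0, g h)
  · rw [sq_sum_eq_card_mul_sum_radical hg hB, hcard]
  · calc ∑ h with B h = 0, g h ≤ ∑ h with B h = 0, 1 := by
          gcongr with h
          nlinarith [hg h]
      _ = ({h | B h = 0}.ncard : ℤ) := by simp [Set.ncard_eq_toFinset_card']
      _ ≤ 4 := by exact_mod_cast hrad

end QuadraticCharacterSum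

section TwistedForm

variable {F ι : Type*} [Field F] [Fintype ι]

/-- The Dembowski–Ostrom form `∑ i j, z i * N i j * σ (z j)` plus the linear form with
coefficients `ℓ`; for `σ` a power of Frobenius it is a quadratic function over `𝔽_p`. -/
def twistedForm (σ : F →+* F) (N : Matrix ι ι F) (ℓ z : ι → F) : F :=
  z ⬝ᵥ N *ᵥ (σ ∘ z) + ℓ ⬝ᵥ z

/-- The coefficient vector of the polarization of `twistedForm σ N ℓ` in direction `h`. The
polarization is `z ⬝ᵥ N *ᵥ (σ ∘ h) + h ⬝ᵥ N *ᵥ (σ ∘ z)`; applying `σ` to its first summand, which a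
`σ`-invariant character does not see, turns it into `(σ ∘ z) ⬝ᵥ twistedPolar σ N h`. -/
def twistedPolar (σ : F →+* F) (N : Matrix ι ι F) (h : ι → F) : ι → F :=
  N.map σ *ᵥ (σ ∘ σ ∘ h) + Nᵀ *ᵥ h

variable {R : Type*} [CommMonoid R] {σ : F →+* F} {N : Matrix ι ι F} {ψ : AddChar F R}

/-- The additive character of the polarization of `ψ ∘ twistedForm σ N ℓ` in direction `h`, for a
`σ`-invariant `ψ`. -/
def polarChar (σ : F →+* F) (N : Matrix ι ι F) (ψ : AddChar F R) (h : ι → F) :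
    AddChar (ι → F) R :=
  ψ.compAddMonoidHom <| AddMonoidHom.mk' (fun z ↦ (σ ∘ z) ⬝ᵥ twistedPolar σ N h) fun x y ↦ by
    rw [← add_dotProduct]
    congr 1
    ext
    simp

lemma polarChar_apply (h z : ι → F) :
    polarChar σ N ψ h z = ψ ((σ ∘ z) ⬝ᵥ twistedPolar σ N h) := rfl

theorem addChar_twistedForm_add (hψ : ∀ x, ψ (σ x) = ψ x) (ℓ z h : ι → F) :
    ψ (twistedForm σ N ℓ (z + h)) =
      ψ (twistedForm σ N ℓ z) * ψ (twistedForm σ N ℓ h) * polarChar σ N ψ h z := by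
  have hσ : σ ∘ (z + h) = σ ∘ z + σ ∘ h := by ext; simp
  have hexpand : twistedForm σ N ℓ (z + h) = twistedForm σ N ℓ z + twistedForm σ N ℓ h +
      (z ⬝ᵥ N *ᵥ (σ ∘ h) + h ⬝ᵥ N *ᵥ (σ ∘ z)) := by
    simp only [twistedForm, hσ, mulVec_add, add_dotProduct, dotProduct_add]
    ring
  have hleft : ψ (z ⬝ᵥ N *ᵥ (σ ∘ h)) = ψ ((σ ∘ z) ⬝ᵥ N.map σ *ᵥ (σ ∘ σ ∘ h)) := by
    rw [← hψ, RingHom.map_dotProduct]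
    congr 2
    ext i
    exact RingHom.map_mulVec ..
  have hright : h ⬝ᵥ N *ᵥ (σ ∘ z) = (σ ∘ z) ⬝ᵥ Nᵀ *ᵥ h := by
    rw [dotProduct_mulVec, dotProduct_comm, mulVec_transpose]
  rw [hexpand, polarChar_apply, twistedPolar, dotProduct_add]
  simp only [AddChar.map_add_eq_mul, hleft, hright]

lemma twistedPolar_eq_zero_of_polarChar_eq_zero (hψ : ψ.IsPrimitive)
    (hσ : Function.Surjective σ) {h : ι → F} (hh : polarChar σ N ψ h = 0) :
    twistedPolar σ N h = 0 := by
  classical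
  ext i
  by_contra hi
  refine hψ hi (DFunLike.ext _ _ fun x ↦ ?_)
  obtain ⟨y, rfl⟩ := hσ x
  have hsingle : σ ∘ Pi.single i y = Pi.single i (σ y) := by
    ext j
    simpa using Pi.apply_single (fun _ ↦ σ) (fun _ ↦ map_zero σ) i y j
  simpa [polarChar_apply, hsingle, mul_comm] using AddChar.eq_zero_iff.1 hh (Pi.single i y)

theorem ncard_twistedPolar_eq_zero_le_pow [DecidableEq ι]
    (hfin : {x | σ (σ x) = x}.Finite) (hN : N.det ≠ 0) :
    {h | twistedPolar σ N h = 0}.ncard ≤ {x | σ (σ x) = x}.ncard ^ Fintype.card ι := by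
  let f : (ι → F) →ₛₗ[σ.comp σ] (ι → F) :=
    { toFun h := N.map σ *ᵥ (σ ∘ σ ∘ h)
      map_add' x y := by rw [← mulVec_add]; congr 1; ext; simp
      map_smul' a x := by rw [← mulVec_smul]; congr 1; ext; simp }
  have hunit : IsUnit Nᵀ := (isUnit_iff_isUnit_det _).2 (by rwa [det_transpose, isUnit_iff_ne_zero])
  have hinj : Function.Injective (-Nᵀ).mulVecLin := mulVec_injective_of_isUnit hunit.neg
  have hset : {h | twistedPolar σ N h = 0} = {h | f h = (-Nᵀ).mulVecLin h} := by
    ext h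
    simp only [twistedPolar, Set.mem_ofPred_eq, mulVecLin_apply, neg_mulVec, add_eq_zero_iff_eq_neg]
    rfl
  rw [hset, ← Module.finrank_fintype_fun_eq_card F]
  exact ncard_semilinear_eq_linear_le hinj hfin

end TwistedForm

section Plane

variable {F : Type*} [Field F]

lemma exists_eq_vecMulVec_of_det_eq_zero {N : Matrix (Fin 2) (Fin 2) F} (hN : N.det = 0) :
    ∃ u v, N = vecMulVec u v := by
  rcases eq_or_ne N 0 with rfl | h
  · exact ⟨0, 0, by simp⟩
  obtain ⟨i, j, hij⟩ : ∃ i j, N i j ≠ 0 := by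
    by_contra! hN0
    exact h (Matrix.ext hN0)
  refine ⟨fun k ↦ N k j, (N i j)⁻¹ • N i, Matrix.ext fun k l ↦ ?_⟩
  rw [det_fin_two] at hN
  have hminor : N k l * N i j = N k j * N i l := by
    fin_cases i <;> fin_cases j <;> fin_cases k <;> fin_cases l <;> grind
  simp only [vecMulVec_apply, Pi.smul_apply, smul_eq_mul]
  field_simp
  exact hminor

lemma eq_zero_of_dotProduct_pair_eq_zero {v w x : Fin 2 → F} (hvw : LinearIndependent F ![v, w])
    (hv : v ⬝ᵥ x = 0) (hw : w ⬝ᵥ x = 0) : x = 0 := by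
  have hunit : IsUnit (of ![v, w]) := linearIndependent_rows_iff_isUnit.1 hvw
  apply mulVec_injective_of_isUnit hunit
  ext i
  fin_cases i <;> simp [mulVec, *]

theorem eq_zero_of_twistedPolar_vecMulVec_eq_zero {σ : F →+* F} {u v h : Fin 2 → F}
    (huv : LinearIndependent F ![σ ∘ u, v]) (hh : twistedPolar σ (vecMulVec u v) h = 0) :
    h = 0 := by
  have hmap : (vecMulVec u v).map σ = vecMulVec (σ ∘ u) (σ ∘ v) := by
    ext; simp [vecMulVec_apply]
  have hcomb : ((σ ∘ v) ⬝ᵥ (σ ∘ σ ∘ h)) • (σ ∘ u) + (u ⬝ᵥ h) • v = 0 := by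
    rw [← hh, twistedPolar, hmap, transpose_vecMulVec, vecMulVec_mulVec, vecMulVec_mulVec]
    simp only [op_smul_eq_smul]
  obtain ⟨hv, hu⟩ := LinearIndependent.pair_iff.1 huv _ _ hcomb
  rw [← RingHom.map_dotProduct, map_eq_zero] at hv
  have hσu : (σ ∘ u) ⬝ᵥ (σ ∘ h) = 0 := by rw [← RingHom.map_dotProduct, hu, map_zero]
  have hσh : σ ∘ h = 0 := eq_zero_of_dotProduct_pair_eq_zero huv hσu hv
  ext i
  simpa using congrFun hσh i

theorem ncard_twistedPolar_eq_zero_le_four {σ : F →+* F} {N : Matrix (Fin 2) (Fin 2) F}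
    (hfix : ∀ x, σ (σ x) = x → x = 0 ∨ x = 1)
    (hN : ∀ (μ : F) (u : Fin 2 → F), N ≠ μ • vecMulVec u (σ ∘ u)) :
    {h | twistedPolar σ N h = 0}.ncard ≤ 4 := by
  by_cases hdet : N.det = 0
  · obtain ⟨u, v, rfl⟩ := exists_eq_vecMulVec_of_det_eq_zero hdet
    have hσu : σ ∘ u ≠ 0 := by
      intro h
      have hu : u = 0 := by ext i; simpa using congrFun h i
      exact hN 0 0 (by simp [hu])
    have huv : LinearIndependent F ![σ ∘ u, v] := by
      refine (LinearIndependent.pair_iff' hσu).2 fun μ hμ ↦ hN μ u ?_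
      rw [← hμ, vecMulVec_smul]
    have hsub : {h | twistedPolar σ (vecMulVec u v) h = 0} ⊆ {0} := fun h hh ↦
      eq_zero_of_twistedPolar_vecMulVec_eq_zero huv hh
    exact (Set.ncard_le_ncard hsub).trans (by simp)
  · have hsub : {x | σ (σ x) = x} ⊆ {0, 1} := hfix
    calc {h | twistedPolar σ N h = 0}.ncard ≤ {x | σ (σ x) = x}.ncard ^ 2 :=
          ncard_twistedPolar_eq_zero_le_pow (Set.toFinite _ |>.subset hsub) hdet
      _ ≤ ({0, 1} : Set F).ncard ^ 2 := by gcongr; exact Set.toFinite _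
      _ ≤ 4 := by simp [Set.ncard_pair zero_ne_one]

theorem sum_addChar_twistedForm_mem [Fintype F] {ψ : AddChar F ℤ} (hψ : ψ.IsPrimitive)
    {q : ℤ} (hq : (Fintype.card F : ℤ) = q) {σ : F →+* F} (hψσ : ∀ x, ψ (σ x) = ψ x)
    (hfix : ∀ x, σ (σ x) = x → x = 0 ∨ x = 1)
    {N : Matrix (Fin 2) (Fin 2) F} (hN : ∀ (μ : F) (u : Fin 2 → F), N ≠ μ • vecMulVec u (σ ∘ u))
    (ℓ : Fin 2 → F) :
    ∑ z, ψ (twistedForm σ N ℓ z) ∈ ({0, q, -q, 2 * q, -(2 * q)} : Set ℤ) := by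
  apply sum_mem_of_ncard_radical_le_four (B := polarChar σ N ψ)
  · simp [← hq]
  · exact fun z ↦ Int.isUnit_sq (ψ.val_isUnit _)
  · exact addChar_twistedForm_add hψσ ℓ
  · have hσ : Function.Surjective σ := Finite.surjective_of_injective σ.injective
    have hsub : {h | polarChar σ N ψ h = 0} ⊆ {h | twistedPolar σ N h = 0} := fun h hh ↦
      twistedPolar_eq_zero_of_polarChar_eq_zero hψ hσ hh
    exact (Set.ncard_le_ncard hsub).trans (ncard_twistedPolar_eq_zero_le_four hfix hN)

end Plane

section SemilinearEquations

variable {F : Type*} [Field F] {σ : F →+* F}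

lemma eq_one_of_mul_map_eq_one (hfix : ∀ x, σ (σ x) = x → x = 0 ∨ x = 1) {z : F}
    (hz : z * σ z = 1) : z = 1 := by
  have hσz : σ z * σ (σ z) = 1 := by simpa using congrArg σ hz
  have hz' : σ (σ z) = z :=
    mul_left_cancel₀ (right_ne_zero_of_mul_eq_one hz) (by rw [hσz, mul_comm, hz])
  exact (hfix z hz').resolve_left (left_ne_zero_of_mul_eq_one hz)

variable [CharP F 2]

lemma add_map_eq_zero_or_one (hfix : ∀ x, σ (σ x) = x → x = 0 ∨ x = 1) {r : F}
    (hr : σ r ^ 2 * (r + σ (σ r)) = σ r + r * σ (σ r)) : r + σ r = 0 ∨ r + σ r = 1 := by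
  set z := r + σ (σ r)
  have hz₁ : z * (σ r ^ 2 + r) = σ r + r ^ 2 := by grind
  have hz₂ : z * (σ (σ r) + σ r ^ 2) = σ (σ r) ^ 2 + σ r := by grind
  by_cases hv : σ r ^ 2 + r = 0
  · have hrr : σ (σ r) = r := by
      have hσ : σ (σ r + r ^ 2) = 0 := by rw [← hz₁, hv, mul_zero, map_zero]
      simp only [map_add, map_pow] at hσ
      grind
    rcases hfix r hrr with rfl | rfl
    · simp
    · simp [CharTwo.add_self_eq_zero]
  · have hnorm : z * σ z = 1 := by
      have hσv : σ (σ r) ^ 2 + σ r ≠ 0 := by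
        simpa using (map_ne_zero σ).2 hv
      have hσz : σ z * (σ (σ r) ^ 2 + σ r) = σ (σ r) + σ r ^ 2 := by
        simpa using congrArg σ hz₁
      apply mul_right_cancel₀ hσv
      rw [mul_assoc, hσz, hz₂, one_mul]
    rw [eq_one_of_mul_map_eq_one hfix hnorm] at hz₁
    have hfactor : (r + σ r) * (r + σ r - 1) = 0 := by grind
    simpa [sub_eq_zero] using hfactor

end SemilinearEquations

section ButterflyMatrix

variable {F : Type*} [Field F]

/-- The matrix of the quadratic part `c V₁ + d V₂` of a component of the closed butterfly with
coefficient `α` and exponent map `x ↦ x * σ x`. The variable `β` stands for `σ α`; keeping it free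
makes transposition the exchange of `α` and `β`. -/
def butterflyMatrix (α β c d : F) : Matrix (Fin 2) (Fin 2) F :=
  !![c * (α * β + 1) + d, c * α + d * β; c * β + d * α, c + d * (α * β + 1)]

lemma transpose_butterflyMatrix (α β c d : F) :
    (butterflyMatrix α β c d)ᵀ = butterflyMatrix β α c d := by
  simp [butterflyMatrix, ← Matrix.ext_iff, Fin.forall_fin_two, mul_comm]

lemma smul_butterflyMatrix (m α β c d : F) :
    m • butterflyMatrix α β c d = butterflyMatrix α β (m * c) (m * d) := by
  simp [butterflyMatrix, smul_of, mul_add, mul_assoc]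

lemma smul_vecMulVec_comp_eq {σ : F →+* F} {u : Fin 2 → F} (hu : u 0 ≠ 0) (μ : F) :
    μ • vecMulVec u (σ ∘ u) =
      (μ * (u 0 * σ (u 0))) • vecMulVec ![1, u 1 / u 0] ![1, σ (u 1 / u 0)] := by
  have hvec : u = u 0 • ![1, u 1 / u 0] := by
    ext i
    fin_cases i <;> simp [mul_div_cancel₀, hu]
  have hσvec : σ ∘ u = σ (u 0) • ![1, σ (u 1 / u 0)] := by
    ext i
    rw [Function.comp_apply, congrFun hvec i]
    fin_cases i <;> simp
  rw [hσvec, vecMulVec_smul, mul_smul, mul_comm (u 0), mul_smul, ← smul_vecMulVec (u 0), ← hvec]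

variable [CharP F 2] {α β c d r t : F}

lemma det_butterflyMatrix (α β c d : F) :
    (butterflyMatrix α β c d).det = (c + d) ^ 2 + c * d * (α * β + α + β) ^ 2 := by
  rw [butterflyMatrix, det_fin_two_of]
  grind

lemma mul_eq_one_of_det_butterflyMatrix_eq_zero
    (h : (butterflyMatrix α β ((1 + r) ^ 2) (r ^ 2)).det = 0) :
    r * (1 + r) * (α * β + α + β) = 1 := by
  have hsq : (r * (1 + r) * (α * β + α + β) - 1) ^ 2 = 0 := by
    rw [← h, det_butterflyMatrix]
    grind
  exact sub_eq_zero.1 (pow_eq_zero_iff two_ne_zero |>.1 hsq)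

lemma butterflyMatrix_row_ratio (hdet : (butterflyMatrix α β ((1 + r) ^ 2) (r ^ 2)).det = 0)
    (h₀₀ : butterflyMatrix α β ((1 + r) ^ 2) (r ^ 2) 0 0 ≠ 0)
    (h₀₁ : butterflyMatrix α β ((1 + r) ^ 2) (r ^ 2) 0 1 =
      butterflyMatrix α β ((1 + r) ^ 2) (r ^ 2) 0 0 * t) :
    t * (r + (1 + r ^ 2) * β) = 1 + r + r ^ 2 * β := by
  have hprod := mul_eq_one_of_det_butterflyMatrix_eq_zero hdet
  have hr : 1 + r ≠ 0 := by rintro h; simp [h] at hprod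
  have hfactor₀ : butterflyMatrix α β ((1 + r) ^ 2) (r ^ 2) 0 0 * (r * (1 + β)) =
      (1 + r * β) * (r + (1 + r ^ 2) * β) := by
    apply mul_left_cancel₀ hr
    simp only [butterflyMatrix, of_apply, cons_val_zero]
    clear * - hprod
    grind
  have hfactor₁ : butterflyMatrix α β ((1 + r) ^ 2) (r ^ 2) 0 1 * (r * (1 + β)) =
      (1 + r * β) * (1 + r + r ^ 2 * β) := by
    apply mul_left_cancel₀ hr
    simp only [butterflyMatrix, of_apply, cons_val_zero, cons_val_one]
    clear * - hprod
    grind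
  have hrβ : 1 + r * β ≠ 0 := by grind
  apply mul_left_cancel₀ hrβ
  rw [← hfactor₁, mul_left_comm, ← hfactor₀, h₀₁]
  ring

lemma mul_mul_eq_zero_of_row_ratio_eq {ρ : F} (hr : t * (r + (1 + r ^ 2) * β) = 1 + r + r ^ 2 * β)
    (hρ : t * (ρ + (1 + ρ ^ 2) * β) = 1 + ρ + ρ ^ 2 * β) :
    (r + ρ) * (β + 1) * ((r + ρ) * β + 1) = 0 := by
  grind

variable {σ : F →+* F}

lemma eq_one_of_add_map_mul_map_eq_one (hfix : ∀ x, σ (σ x) = x → x = 0 ∨ x = 1)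
    (hα : r * (1 + r) * (α * σ α + α + σ α) = 1) (hrα : (r + σ r) * σ α = 1) : α = 1 := by
  have hσα : σ r * (1 + σ r) * (σ α * σ (σ α) + σ α + σ (σ α)) = 1 := by
    simpa using congrArg σ hα
  have hσrα : (σ r + σ (σ r)) * σ (σ α) = 1 := by simpa using congrArg σ hrα
  have hr : σ r ^ 2 * (r + σ (σ r)) = σ r + r * σ (σ r) := by
    have hne : σ (σ α) * σ α ≠ 0 :=
      mul_ne_zero (right_ne_zero_of_mul_eq_one hσrα) (right_ne_zero_of_mul_eq_one hrα)
    apply mul_right_cancel₀ hne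
    clear hα
    grind
  have hone : r + σ r = 1 :=
    (add_map_eq_zero_or_one hfix hr).resolve_left (left_ne_zero_of_mul_eq_one hrα)
  rwa [hone, one_mul, map_eq_one_iff σ σ.injective] at hrα

lemma eq_one_of_butterflyMatrix_eq (hfix : ∀ x, σ (σ x) = x → x = 0 ∨ x = 1) {n s : F}
    (hn : n ≠ 0) (h : butterflyMatrix α (σ α) ((1 + r) ^ 2) (r ^ 2) =
      n • vecMulVec ![1, s] ![1, σ s]) :
    α = 1 := by
  have hdet : (butterflyMatrix α (σ α) ((1 + r) ^ 2) (r ^ 2)).det = 0 := by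
    rw [h, det_smul, det_vecMulVec, mul_zero]
  have hprod := mul_eq_one_of_det_butterflyMatrix_eq_zero hdet
  have hratio : σ s * (r + (1 + r ^ 2) * σ α) = 1 + r + r ^ 2 * σ α :=
    butterflyMatrix_row_ratio hdet (by simpa [h] using hn) (by simp [h])
  have hratio' : s * (r + (1 + r ^ 2) * α) = 1 + r + r ^ 2 * α := by
    apply butterflyMatrix_row_ratio (α := σ α) <;> rw [← transpose_butterflyMatrix]
    · rwa [det_transpose]
    · simpa [h] using hn
    · simp [h]
  have hσratio' : σ s * (σ r + (1 + σ r ^ 2) * σ α) = 1 + σ r + σ r ^ 2 * σ α := by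
    simpa using congrArg σ hratio'
  have hr : r + σ r ≠ 0 := by
    intro hr
    have hσr : σ r = r := (CharTwo.add_eq_zero.1 hr).symm
    rcases hfix r (by rw [hσr, hσr]) with rfl | rfl <;> simp [CharTwo.add_self_eq_zero] at hprod
  rcases mul_eq_zero.1 (mul_mul_eq_zero_of_row_ratio_eq hratio hσratio') with hα | hrα
  · rw [mul_eq_zero, or_iff_right hr, CharTwo.add_eq_zero] at hα
    exact (map_eq_one_iff σ σ.injective).1 hα
  · exact eq_one_of_add_map_mul_map_eq_one hfix hprod (CharTwo.add_eq_zero.1 hrα)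

lemma eq_zero_of_butterflyMatrix_row_col_eq_zero (hfix : ∀ x, σ (σ x) = x → x = 0 ∨ x = 1)
    (hα0 : α ≠ 0) (hα1 : α ≠ 1) (hrow : ∀ j, butterflyMatrix α (σ α) c d 0 j = 0)
    (hcol : ∀ i, butterflyMatrix α (σ α) c d i 0 = 0) : c = 0 ∧ d = 0 := by
  have hα : σ α ≠ α := fun h ↦ by simpa [hα0, hα1] using hfix α (by rw [h, h])
  have h₀₀ : c * (α * σ α + 1) + d = 0 := hrow 0
  have h₀₁ : c * α + d * σ α = 0 := hrow 1
  have h₁₀ : c * σ α + d * α = 0 := hcol 1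
  have hc : c * (σ α - α) ^ 2 = 0 := by grind
  obtain rfl : c = 0 := by simpa [sub_eq_zero, hα] using hc
  simpa using h₀₀

lemma butterflyMatrix_self_ne (hfix : ∀ x, σ (σ x) = x → x = 0 ∨ x = 1) {n s : F}
    (hα0 : α ≠ 0) (hn : n ≠ 0) :
    butterflyMatrix α (σ α) c c ≠ n • vecMulVec ![1, s] ![1, σ s] := by
  intro h
  have h₀₀ : c * (α * σ α + 1) + c = n := by simpa [butterflyMatrix] using congrFun₂ h 0 0
  have h₀₁ : c * α + c * σ α = n * σ s := by simpa [butterflyMatrix] using congrFun₂ h 0 1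
  have h₁₁ : c + c * (α * σ α + 1) = n * (s * σ s) := by
    simpa [butterflyMatrix] using congrFun₂ h 1 1
  obtain rfl : s = 1 :=
    eq_one_of_mul_map_eq_one hfix (mul_left_cancel₀ hn (by rw [← h₁₁, add_comm, h₀₀, mul_one]))
  have hc : c ≠ 0 := by rintro rfl; simp [hn.symm] at h₀₀
  have hmul : (α + 1) * σ (α + 1) = 1 := by
    apply mul_left_cancel₀ hc
    simp only [map_add, map_one] at h₀₁ ⊢
    grind
  simpa [hα0] using eq_one_of_mul_map_eq_one hfix hmul

theorem butterflyMatrix_ne_smul_vecMulVec [PerfectRing F 2]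
    (hfix : ∀ x, σ (σ x) = x → x = 0 ∨ x = 1) (hα0 : α ≠ 0) (hα1 : α ≠ 1)
    (hcd : ¬(c = 0 ∧ d = 0)) (μ : F) (u : Fin 2 → F) :
    butterflyMatrix α (σ α) c d ≠ μ • vecMulVec u (σ ∘ u) := by
  intro h
  by_cases hn : μ * (u 0 * σ (u 0)) = 0
  · have hμu : μ = 0 ∨ u 0 = 0 := by simpa using hn
    apply hcd (eq_zero_of_butterflyMatrix_row_col_eq_zero hfix hα0 hα1 ?_ ?_) <;>
      rcases hμu with hμ | hu <;> simp [vecMulVec_apply, *]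
  have hu : u 0 ≠ 0 := by rintro hu; simp [hu] at hn
  rw [smul_vecMulVec_comp_eq hu] at h
  by_cases hadd : c + d = 0
  · obtain rfl : c = d := CharTwo.add_eq_zero.1 hadd
    exact butterflyMatrix_self_ne hfix hα0 hn h
  · obtain ⟨r, hr⟩ : ∃ r, r ^ 2 = (c + d)⁻¹ * d := surjective_frobenius F 2 _
    have hr' : (1 + r) ^ 2 = (c + d)⁻¹ * c := by
      rw [CharTwo.add_sq, hr]
      field_simp
      grind
    refine hα1 (eq_one_of_butterflyMatrix_eq hfix (r := r) (s := u 1 / u 0)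
      (mul_ne_zero (inv_ne_zero hadd) hn) ?_)
    rw [hr, hr', mul_smul, ← h, smul_butterflyMatrix]

end ButterflyMatrix

section TraceSign

variable {F : Type*} [Field F] [Algebra (ZMod 2) F]

variable (F) in
/-- The sign character `x ↦ (-1) ^ Tr x` of a field of characteristic two, with values in `ℤ`. -/
noncomputable def traceSign : AddChar F ℤ :=
  (AddChar.zmodChar 2 (ζ := (-1 : ℤ)) (by norm_num)).compAddMonoidHom
    (Algebra.trace (ZMod 2) F).toAddMonoidHom

lemma traceSign_apply (x : F) :
    traceSign F x = if Algebra.trace (ZMod 2) F x = 0 then 1 else -1 := by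
  change (-1 : ℤ) ^ (Algebra.trace (ZMod 2) F x).val = _
  generalize Algebra.trace (ZMod 2) F x = a
  fin_cases a <;> rfl

variable [Finite F]

lemma traceSign_map (σ : F →+* F) (x : F) : traceSign F (σ x) = traceSign F x := by
  have hcomm (r : ZMod 2) : σ (algebraMap (ZMod 2) F r) = algebraMap (ZMod 2) F r :=
    RingHom.congr_fun (Subsingleton.elim (σ.comp (algebraMap (ZMod 2) F)) _) r
  let e : F ≃ₐ[ZMod 2] F := AlgEquiv.ofBijective { σ with commutes' := hcomm }
    (Finite.injective_iff_bijective.1 σ.injective)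
  have htrace : Algebra.trace (ZMod 2) F (σ x) = Algebra.trace (ZMod 2) F x :=
    Algebra.trace_eq_of_algEquiv e x
  rw [traceSign_apply, traceSign_apply, htrace]

lemma isPrimitive_traceSign : (traceSign F).IsPrimitive := by
  apply AddChar.IsPrimitive.of_ne_one
  obtain ⟨x, hx⟩ := Algebra.trace_surjective (ZMod 2) F 1
  intro h
  have hsign : traceSign F x = 1 := by rw [h, AddChar.one_apply]
  simp [traceSign_apply, hx] at hsign

end TraceSign

lemma pow_pow_gcd_eq_self {M : Type*} [Monoid M] {x : M} {q m n : ℕ} (hm : x ^ q ^ m = x)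
    (hn : x ^ q ^ n = x) : x ^ q ^ m.gcd n = x := by
  have hperiodic (j : ℕ) : Function.IsPeriodicPt (· ^ q) j x ↔ x ^ q ^ j = x := by
    rw [Function.IsPeriodicPt, Function.IsFixedPt, pow_iterate]
  rw [← hperiodic] at hm hn ⊢
  exact hm.gcd hn

section GaloisField

variable {k : ℕ}

lemma algebraMap_trace_eq_absTrace (hk : k ≠ 0) (x : GaloisField 2 k) :
    algebraMap (ZMod 2) (GaloisField 2 k) (Algebra.trace (ZMod 2) (GaloisField 2 k) x) =
      absTrace k x := by
  rw [FiniteField.algebraMap_trace_eq_sum_pow, GaloisField.finrank 2 hk, Nat.card_zmod, absTrace]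

lemma traceSign_eq_ite_absTrace (hk : k ≠ 0) (x : GaloisField 2 k) [Decidable (absTrace k x = 0)] :
    traceSign (GaloisField 2 k) x = if absTrace k x = 0 then 1 else -1 := by
  simp only [traceSign_apply, ← algebraMap_trace_eq_absTrace hk, map_eq_zero]

lemma eq_zero_or_one_of_iterateFrobenius_iterateFrobenius_eq (hk : Odd k) {i : ℕ}
    (hik : i.Coprime k) {x : GaloisField 2 k}
    (hx : iterateFrobenius (GaloisField 2 k) 2 i (iterateFrobenius (GaloisField 2 k) 2 i x) = x) :
    x = 0 ∨ x = 1 := by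
  have hi : x ^ 2 ^ (2 * i) = x := by
    rwa [iterateFrobenius_def, iterateFrobenius_def, ← pow_mul, ← pow_add, ← two_mul] at hx
  have hcard : x ^ 2 ^ k = x := by
    rw [← GaloisField.card 2 k hk.pos.ne', Nat.card_eq_fintype_card, FiniteField.pow_card]
  have hcoprime : (2 * i).gcd k = 1 := (Nat.coprime_two_left.2 hk).mul_left hik
  have hsq : x ^ 2 = x := by simpa [hcoprime] using pow_pow_gcd_eq_self hi hcard
  exact IsIdempotentElem.iff_eq_zero_or_one.1 (by rwa [IsIdempotentElem, ← sq])

end GaloisField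

lemma twistedForm_butterflyMatrix {F : Type*} [Field F] (σ : F →+* F) (α a b c d x y : F) :
    twistedForm σ (butterflyMatrix α (σ α) c d) ![a, b] ![x, y] =
      c * ((α * x + y) * σ (α * x + y) + x * σ x) +
        d * ((x + α * y) * σ (x + α * y) + y * σ y) + a * x + b * y := by
  simp only [twistedForm, butterflyMatrix, mulVec, dotProduct, Fin.sum_univ_two, of_apply,
    Function.comp_apply, cons_val_zero, cons_val_one, map_add, map_mul]
  ring

theorem butterflyWalsh_eq_sum_twistedForm {k : ℕ} (hk : k ≠ 0) (i t : ℕ)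
    (α a b c d : GaloisField 2 k) :
    butterflyWalsh k ((2 ^ i + 1) * 2 ^ t) α a b (c ^ 2 ^ t) (d ^ 2 ^ t) =
      ∑ z, traceSign (GaloisField 2 k) (twistedForm (iterateFrobenius (GaloisField 2 k) 2 i)
        (butterflyMatrix α (iterateFrobenius (GaloisField 2 k) 2 i α) c d) ![a, b] z) := by
  have hpow (w : GaloisField 2 k) : w ^ ((2 ^ i + 1) * 2 ^ t) =
      (w * iterateFrobenius (GaloisField 2 k) 2 i w) ^ 2 ^ t := by
    rw [iterateFrobenius_def, pow_mul, pow_succ']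
  rw [butterflyWalsh, ← (finTwoArrowEquiv _).symm.sum_comp, Fintype.sum_prod_type]
  refine Finset.sum_congr rfl fun x _ ↦ Finset.sum_congr rfl fun y _ ↦ ?_
  rw [← traceSign_eq_ite_absTrace hk]
  simp only [finTwoArrowEquiv_symm_apply, twistedForm_butterflyMatrix, hpow, add_assoc,
    AddChar.map_add_eq_mul, ← iterateFrobenius_def]
  simp only [← map_add, ← map_mul, traceSign_map]

/-- Part of Theorem 3.7: every Walsh transform value of the closed butterfly with
`k` odd, `gcd(i,k) = 1`, exponent `e = (2^i+1)·2^t` and coefficient `α ≠ 0, 1` lies in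
`{0, ±2^k, ±2^(k+1)}`. -/
theorem closedButterfly_walsh_values (k i t : ℕ) (hk : Odd k) (hkpos : 0 < k)
    (hipos : 0 < i) (hgcd : Nat.gcd i k = 1) (ht : t ≤ k - 1)
    (α : GaloisField 2 k) (hα0 : α ≠ 0) (hα1 : α ≠ 1)
    (a b c d : GaloisField 2 k) (hcd : (c, d) ≠ (0, 0)) :
    butterflyWalsh k ((2 ^ i + 1) * 2 ^ t) α a b c d
      ∈ ({0, 2 ^ k, -2 ^ k, 2 ^ (k + 1), -2 ^ (k + 1)} : Set ℤ) := by
  have hk0 : k ≠ 0 := hkpos.ne'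
  obtain ⟨c, rfl⟩ : ∃ c', c' ^ 2 ^ t = c := (bijective_iterateFrobenius _ 2 t).surjective c
  obtain ⟨d, rfl⟩ : ∃ d', d' ^ 2 ^ t = d := (bijective_iterateFrobenius _ 2 t).surjective d
  have hcd' : ¬(c = 0 ∧ d = 0) := by rintro ⟨rfl, rfl⟩; simp at hcd
  have hfix := fun x ↦ eq_zero_or_one_of_iterateFrobenius_iterateFrobenius_eq hk hgcd (x := x)
  have hcard : (Fintype.card (GaloisField 2 k) : ℤ) = 2 ^ k := by
    rw [← Nat.card_eq_fintype_card, GaloisField.card 2 k hk0]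
    norm_cast
  rw [butterflyWalsh_eq_sum_twistedForm hk0, pow_succ']
  exact sum_addChar_twistedForm_mem isPrimitive_traceSign hcard (traceSign_map _) hfix
    (butterflyMatrix_ne_smul_vecMulVec hfix hα0 hα1 hcd') ![a, b]
end

section
/- Let k be an odd positive integer, i a positive integer with gcd(i,k) = 1, t a natural number with 0 ≤ t ≤ k−1, e = (2^i + 1)·2^t, and F = GaloisField 2 k. Define V : F × F → F × F by V(x,y) = ((x + y)^e + x^e, (x + y)^e + y^e), with components V₁, V₂. Then for all a, b, c, d ∈ F with (c,d) ≠ (0,0), the Walsh transform value W((a,b),(c,d)) = Σ_{x,y ∈ F} χ(Tr(c·V₁(x,y) + d·V₂(x,y) + a·x + b·y)) lies in the set {0, 2^(k+1), −2^(k+1)} of integers. -/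
/-- The Walsh transform `W((a,b),(c,d)) = Σ_{x,y} χ(Tr(c·V₁(x,y) + d·V₂(x,y) + ax + by))`
of the closed butterfly with trivial coefficient,
`V(x,y) = ((x+y)^e + x^e, (x+y)^e + y^e)`, where `χ(0) = 1` and `χ(1) = -1`. -/
noncomputable def butterflyWalshOne (k e : ℕ) (a b c d : GaloisField 2 k) : ℤ :=
  haveI := Classical.decEq (GaloisField 2 k)
  ∑ x : GaloisField 2 k, ∑ y : GaloisField 2 k,
    if absTrace k (c * ((x + y) ^ e + x ^ e) + d * ((x + y) ^ e + y ^ e)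
        + a * x + b * y) = 0 then 1 else -1

/-!
Let `F` be the field with `2 ^ k` elements and `L = F[ω]`, `ω² = ω + 1`, its quadratic extension.
As `k` is odd, `i` and `t` may be replaced by the even numbers `i * (k + 1)` and `t * (k + 1)`
without changing the maps `x ↦ x ^ 2 ^ i` and `x ↦ x ^ 2 ^ t` of `F`. Even powers of the Frobenius
fix `ω`, and this makes the butterfly a power map in disguise:
`(x + y ω) ^ e = (V₁ + V₂) + V₁ ω`. Its Walsh coefficients are therefore Weil sums
`∑ ψ (γ X ^ e + δ X)` over `L` with `γ ≠ 0`.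

Some twist `x ↦ ψ (m x)` of `ψ` is Frobenius-invariant, and `e` is coprime to `4 ^ k - 1`, so
rescaling `X` leaves the sum `S = ∑ ψ (X ^ (2 ^ j + 1) + δ X)` with `j` even and `ψ`
Frobenius-invariant. The quadratic form in `S` has radical `{U | U ^ 4 = U} = 𝔽₄`, so
`S ^ 2 = 4 ^ k * ∑_{U ∈ 𝔽₄} ψ ((1 + δ) U)`, where the sum over `𝔽₄` is `0` or `4`.
-/

section Arithmetic

variable {j k : ℕ}

theorem gcd_two_pow_two_mul_sub_one (hjk : j.Coprime k) :
    Nat.gcd (2 ^ (2 * j) - 1) (2 ^ (2 * k) - 1) = 3 := by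
  rw [Nat.pow_sub_one_gcd_pow_sub_one, Nat.gcd_mul_left, hjk.gcd_eq_one]
  norm_num

theorem coprime_two_pow_sub_one_two_pow_add_one (hj : Even j) (hjk : j.Coprime k) :
    (2 ^ (2 * k) - 1).Coprime (2 ^ j + 1) := by
  have hdvd : 2 ^ j + 1 ∣ 2 ^ (2 * j) - 1 :=
    ⟨2 ^ j - 1, by rw [mul_comm 2 j, pow_mul, ← Nat.sq_sub_sq, one_pow]⟩
  have hgcd : Nat.gcd (2 ^ (2 * k) - 1) (2 ^ j + 1) ∣ 3 := by
    rw [← gcd_two_pow_two_mul_sub_one hjk]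
    exact Nat.dvd_gcd ((Nat.gcd_dvd_right _ _).trans hdvd) (Nat.gcd_dvd_left _ _)
  have hmod : (2 ^ j + 1) % 3 = 2 := by
    obtain ⟨m, rfl⟩ := hj
    rw [← two_mul, pow_mul, Nat.add_mod, Nat.pow_mod]
    simp
  refine ((Nat.dvd_prime Nat.prime_three).1 hgcd).resolve_right fun h ↦ ?_
  have : 3 ∣ 2 ^ j + 1 := h ▸ Nat.gcd_dvd_right _ _
  lia

theorem pow_two_pow_eq_self_of_even {M : Type*} [Monoid M] {u : M} (hu : u ^ 4 = u)
    (hj : Even j) : u ^ 2 ^ j = u := by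
  obtain ⟨m, rfl⟩ := hj
  rw [← two_mul, pow_mul]
  induction m with
  | zero => simp
  | succ m ih => rw [pow_succ, pow_mul, ih]; exact hu

end Arithmetic

section FieldOfCardFourPow

variable {L : Type*} [Field L] [Fintype L] {j k : ℕ}

theorem pow_four_eq_self_of_pow_two_pow_two_mul_eq_self (hL : Fintype.card L = 2 ^ (2 * k))
    (hjk : j.Coprime k) {u : L} (hu : u ^ 2 ^ (2 * j) = u) : u ^ 4 = u := by
  rcases eq_or_ne u 0 with rfl | hu0
  · simp
  have hj : u ^ (2 ^ (2 * j) - 1) = 1 :=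
    mul_right_cancel₀ hu0 (by rw [pow_sub_one_mul (by positivity), hu, one_mul])
  have hk : u ^ (2 ^ (2 * k) - 1) = 1 := hL ▸ FiniteField.pow_card_sub_one_eq_one u hu0
  have h3 : u ^ 3 = 1 := gcd_two_pow_two_mul_sub_one hjk ▸ pow_gcd_eq_one.2 ⟨hj, hk⟩
  rw [pow_succ, h3, one_mul]

theorem exists_pow_mul_two_pow_eq (hL : Fintype.card L = 2 ^ (2 * k)) (hj : Even j)
    (hjk : j.Coprime k) (t : ℕ) {g : L} (hg : g ≠ 0) :
    ∃ s : L, s ≠ 0 ∧ s ^ ((2 ^ j + 1) * 2 ^ t) = g := by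
  have hodd : Odd (2 ^ (2 * k) - 1) := by
    have : k ≠ 0 := by rintro rfl; exact (Fintype.one_lt_card (α := L)).ne' (by simpa using hL)
    exact Nat.Even.sub_odd Nat.one_le_two_pow (by simp [Nat.even_pow, this]) odd_one
  have hcop : (Nat.card Lˣ).Coprime ((2 ^ j + 1) * 2 ^ t) := by
    rw [Nat.card_units, Nat.card_eq_fintype_card, hL]
    exact (coprime_two_pow_sub_one_two_pow_add_one hj hjk).mul_right
      (hodd.coprime_two_right.pow_right t)
  obtain ⟨s, hs⟩ := (powCoprime hcop).surjective (Units.mk0 g hg)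
  exact ⟨s, s.ne_zero, by simpa using congrArg Units.val hs⟩

variable [CharP L 2]

theorem exists_sq_eq_add_one (hL : Fintype.card L = 2 ^ (2 * k)) : ∃ w : L, w ^ 2 = w + 1 := by
  have h3 : 3 ∣ Nat.card Lˣ := by
    rw [Nat.card_units, Nat.card_eq_fintype_card, hL, pow_mul]
    simpa using Nat.sub_dvd_pow_sub_pow 4 1 k
  obtain ⟨w, hw⟩ := exists_prime_orderOf_dvd_card' 3 h3
  have hw3 : (w : L) ^ 3 = 1 := by
    rw [← hw, ← Units.val_pow_eq_pow_val, pow_orderOf_eq_one, Units.val_one]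
  have hw1 : (w : L) - 1 ≠ 0 := fun h ↦ by
    have : w = 1 := Units.ext (sub_eq_zero.1 h)
    simp [this] at hw
  refine ⟨w, mul_left_cancel₀ hw1 ?_⟩
  linear_combination hw3 + (1 - (w : L) ^ 2) * CharTwo.two_eq_zero (R := L)

end FieldOfCardFourPow

section CharTwo

variable {L : Type*} [Field L] [CharP L 2] {w : L}

theorem pow_four_eq_self_of_sq_eq_add_one {R : Type*} [CommRing R] [CharP R 2] {w : R}
    (hw : w ^ 2 = w + 1) : w ^ 4 = w := by
  linear_combination (w ^ 2 + w + 2) * hw + (w + 1) * CharTwo.two_eq_zero (R := R)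

theorem pow_four_eq_self_iff (hw : w ^ 2 = w + 1) {u : L} :
    u ^ 4 = u ↔ u = 0 ∨ u = 1 ∨ u = w ∨ u = w + 1 := by
  have hfactor : u ^ 4 - u = u * ((u - 1) * ((u - w) * (u - (w + 1)))) := by
    linear_combination (u - u ^ 2) * hw
      + (u ^ 3 * w + u ^ 3 - 2 * u ^ 2 * w - u ^ 2 + u * w) * CharTwo.two_eq_zero (R := L)
  rw [← sub_eq_zero, hfactor]
  simp only [mul_eq_zero, sub_eq_zero]

theorem sum_pow_four_eq_self_addChar [Fintype L] [DecidableEq L] (hw : w ^ 2 = w + 1)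
    (ψ : AddChar L ℤ) : ∑ u : L with u ^ 4 = u, ψ u = (1 + ψ 1) * (1 + ψ w) := by
  have hw0 : w ≠ 0 := by rintro rfl; simp at hw
  have hw1 : w + 1 ≠ 0 := hw ▸ pow_ne_zero 2 hw0
  have hw1' : w ≠ 1 := fun h ↦ hw1 (CharTwo.add_eq_zero.2 h)
  have hset : ({u | u ^ 4 = u} : Finset L) = {0, 1, w, w + 1} := by
    ext u
    simp [pow_four_eq_self_iff hw]
  rw [hset, Finset.sum_insert (by simp [hw0.symm, hw1.symm]),
    Finset.sum_insert (by simp [hw1'.symm, hw0]), Finset.sum_insert (by simp),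
    Finset.sum_singleton, ψ.map_zero_eq_one, ψ.map_add_eq_mul]
  ring

end CharTwo

theorem exists_mulShift_eq {L : Type*} [Field L] [Finite L] {ψ : AddChar L ℤ} (hψ : ψ ≠ 1)
    (φ : AddChar L ℤ) : ∃ m : L, ψ.mulShift m = φ := by
  cases nonempty_fintype L
  -- The duality count `AddChar.card_eq` is about complex characters.
  let castHom : ℤ →* ℂ := (Int.castRingHom ℂ).toMonoidHom
  have hcast : Function.Injective castHom := Int.cast_injective
  have hprim : (castHom.compAddChar ψ).IsPrimitive :=
    (AddChar.IsPrimitive.of_ne_one hψ).compMulHom_of_isPrimitive hcast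
  have hbij : Function.Bijective (castHom.compAddChar ψ).mulShift :=
    (Fintype.bijective_iff_injective_and_card _).2
      ⟨AddChar.to_mulShift_inj_of_isPrimitive hprim, AddChar.card_eq.symm⟩
  obtain ⟨m, hm⟩ := hbij.surjective (castHom.compAddChar φ)
  exact ⟨m, AddChar.ext _ _ fun x ↦ hcast (DFunLike.congr_fun hm x)⟩

theorem exists_mulShift_sq_eq {L : Type*} [Field L] [Finite L] [CharP L 2] {ψ : AddChar L ℤ}
    (hψ : ψ ≠ 1) : ∃ m : L, m ≠ 0 ∧ ∀ x, ψ.mulShift m (x ^ 2) = ψ.mulShift m x := by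
  obtain ⟨n, hn⟩ := exists_mulShift_eq hψ (ψ.compAddMonoidHom (frobenius L 2).toAddMonoidHom)
  have hsq (x : L) : ψ (x ^ 2) = ψ (n * x) := (DFunLike.congr_fun hn x).symm
  have hn0 : n ≠ 0 := by
    rintro rfl
    refine hψ (AddChar.ext _ _ fun x ↦ ?_)
    obtain ⟨y, rfl⟩ := (frobeniusEquiv L 2).surjective x
    simpa [frobenius_def] using hsq y
  refine ⟨n ^ 2, pow_ne_zero 2 hn0, fun x ↦ ?_⟩
  calc ψ (n ^ 2 * x ^ 2) = ψ ((n * x) ^ 2) := by rw [mul_pow]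
    _ = ψ (n * (n * x)) := hsq _
    _ = ψ (n ^ 2 * x) := by rw [sq, mul_assoc]

section GoldCharacter

variable {L : Type*} [CommRing L] {ψ : AddChar L ℤ}

theorem map_pow_two_pow_of_map_sq {A B : Type*} [Monoid A] {f : A → B}
    (hf : ∀ x, f (x ^ 2) = f x) (n : ℕ) (x : A) : f (x ^ 2 ^ n) = f x := by
  induction n with
  | zero => simp
  | succ n ih => rw [pow_succ, pow_mul, hf, ih]

theorem addChar_gold_eq_of_pow_four_eq_self (hfrob : ∀ x, ψ (x ^ 2) = ψ x) {j : ℕ} (hj : Even j)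
    (δ : L) {U : L} (hU : U ^ 4 = U) :
    ψ (U ^ (2 ^ j + 1) + δ * U) = ψ.mulShift (1 + δ) U := by
  rw [pow_succ, pow_two_pow_eq_self_of_even hU hj, ψ.map_add_eq_mul, ← sq, hfrob,
    ← ψ.map_add_eq_mul, AddChar.mulShift_apply, add_mul, one_mul]

theorem addChar_gold_mul_addChar_gold_add [CharP L 2] (ψ : AddChar L ℤ) (j : ℕ) (δ X U : L) :
    ψ (X ^ (2 ^ j + 1) + δ * X) * ψ ((X + U) ^ (2 ^ j + 1) + δ * (X + U))
      = ψ (U ^ (2 ^ j + 1) + δ * U) * ψ (X ^ 2 ^ j * U + X * U ^ 2 ^ j) := by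
  rw [← ψ.map_add_eq_mul, ← ψ.map_add_eq_mul, pow_succ (X + U), add_pow_char_pow]
  congr 1
  linear_combination (X ^ 2 ^ j * X + δ * X) * CharTwo.two_eq_zero (R := L)

end GoldCharacter

/-- The Weil sum `∑ ψ (γ X ^ e + δ X)`: the Walsh coefficient of the power map `X ↦ X ^ e` at
`(δ, γ)`, taken with respect to an arbitrary integer-valued additive character `ψ`. -/
def powerWalsh {L : Type*} [CommRing L] [Fintype L] (ψ : AddChar L ℤ) (e : ℕ) (γ δ : L) : ℤ :=
  ∑ X : L, ψ (γ * X ^ e + δ * X)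

section PowerWalsh

variable {L : Type*} [Field L] [Fintype L] {ψ : AddChar L ℤ}

theorem powerWalsh_mulShift (m : L) (e : ℕ) (γ δ : L) :
    powerWalsh (ψ.mulShift m) e γ δ = powerWalsh ψ e (m * γ) (m * δ) := by
  simp only [powerWalsh, AddChar.mulShift_apply, mul_add, mul_assoc]

theorem powerWalsh_mul_pow_mul {s : L} (hs : s ≠ 0) (e : ℕ) (γ δ : L) :
    powerWalsh ψ e (γ * s ^ e) (δ * s) = powerWalsh ψ e γ δ := by
  simp only [powerWalsh, mul_assoc, ← mul_pow]
  exact Equiv.sum_comp (Equiv.mulLeft₀ s hs) fun X ↦ ψ (γ * X ^ e + δ * X)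

theorem powerWalsh_exponent_mul_two_pow (hfrob : ∀ x, ψ (x ^ 2) = ψ x) (e t : ℕ) (δ : L) :
    powerWalsh ψ (e * 2 ^ t) 1 δ = powerWalsh ψ e 1 δ := by
  simp only [powerWalsh, one_mul, ψ.map_add_eq_mul, pow_mul, map_pow_two_pow_of_map_sq hfrob]

theorem sq_sum_eq_sum_sum_mul_add {A R : Type*} [AddGroup A] [Fintype A] [CommSemiring R]
    (f : A → R) : (∑ X, f X) ^ 2 = ∑ U, ∑ X, f X * f (X + U) := by
  rw [Finset.sum_comm, sq, Finset.sum_mul_sum]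
  exact Finset.sum_congr rfl fun X _ ↦
    (Equiv.sum_comp (Equiv.addLeft X) fun Y ↦ f X * f Y).symm

variable [CharP L 2] {j k : ℕ}

theorem sum_addChar_gold_polarization [DecidableEq L] (hψ : ψ ≠ 1)
    (hfrob : ∀ x, ψ (x ^ 2) = ψ x) (j : ℕ) (U : L) :
    ∑ X : L, ψ (X ^ 2 ^ j * U + X * U ^ 2 ^ j)
      = if U ^ 2 ^ (2 * j) = U then (Fintype.card L : ℤ) else 0 := by
  have hfactor (X : L) : ψ (X ^ 2 ^ j * U + X * U ^ 2 ^ j)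
      = ψ (iterateFrobeniusEquiv L 2 j X * (U ^ 2 ^ (2 * j) - U)) := by
    rw [iterateFrobeniusEquiv_def, CharTwo.sub_eq_add, mul_add, add_comm, ψ.map_add_eq_mul,
      ψ.map_add_eq_mul, ← map_pow_two_pow_of_map_sq hfrob j (X * U ^ 2 ^ j), mul_pow, ← pow_mul,
      ← pow_add, ← two_mul]
  simp only [hfactor]
  rw [(iterateFrobeniusEquiv L 2 j).bijective.sum_comp fun Y ↦ ψ (Y * (U ^ 2 ^ (2 * j) - U)),
    AddChar.sum_mulShift _ (.of_ne_one hψ)]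
  simp [sub_eq_zero]

theorem sq_powerWalsh_gold [DecidableEq L] (hψ : ψ ≠ 1) (hfrob : ∀ x, ψ (x ^ 2) = ψ x) (j : ℕ)
    (δ : L) : powerWalsh ψ (2 ^ j + 1) 1 δ ^ 2 = Fintype.card L *
      ∑ U : L with U ^ 2 ^ (2 * j) = U, ψ (U ^ (2 ^ j + 1) + δ * U) := by
  simp only [powerWalsh, one_mul]
  rw [sq_sum_eq_sum_sum_mul_add, Finset.mul_sum, Finset.sum_filter]
  refine Finset.sum_congr rfl fun U _ ↦ ?_
  simp only [addChar_gold_mul_addChar_gold_add, ← Finset.mul_sum,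
    sum_addChar_gold_polarization hψ hfrob]
  split_ifs <;> ring

theorem powerWalsh_gold_one_mem (hL : Fintype.card L = 2 ^ (2 * k)) (hj : Even j)
    (hjk : j.Coprime k) (hψ : ψ ≠ 1) (hfrob : ∀ x, ψ (x ^ 2) = ψ x) (δ : L) :
    powerWalsh ψ (2 ^ j + 1) 1 δ ∈ ({0, 2 ^ (k + 1), -2 ^ (k + 1)} : Set ℤ) := by
  classical
  obtain ⟨w, hw⟩ := exists_sq_eq_add_one hL
  have hradical (U : L) : U ^ 2 ^ (2 * j) = U ↔ U ^ 4 = U :=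
    ⟨pow_four_eq_self_of_pow_two_pow_two_mul_eq_self hL hjk,
      fun hU ↦ pow_two_pow_eq_self_of_even hU (even_two_mul j)⟩
  have hsq : powerWalsh ψ (2 ^ j + 1) 1 δ ^ 2
      = 2 ^ (2 * k) * ((1 + ψ.mulShift (1 + δ) 1) * (1 + ψ.mulShift (1 + δ) w)) := by
    simp only [sq_powerWalsh_gold hψ hfrob, hL, hradical, ← sum_pow_four_eq_self_addChar hw,
      Nat.cast_pow, Nat.cast_ofNat]
    congr 1
    exact Finset.sum_congr rfl fun U hU ↦
      addChar_gold_eq_of_pow_four_eq_self hfrob hj δ (Finset.mem_filter.1 hU).2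
  have hvalues : powerWalsh ψ (2 ^ j + 1) 1 δ ^ 2 = 0
      ∨ powerWalsh ψ (2 ^ j + 1) 1 δ ^ 2 = (2 ^ (k + 1)) ^ 2 := by
    rw [hsq]
    rcases Int.isUnit_iff.1 ((ψ.mulShift (1 + δ)).val_isUnit 1) with hψ1 | hψ1 <;>
      rcases Int.isUnit_iff.1 ((ψ.mulShift (1 + δ)).val_isUnit w) with hψw | hψw <;>
      rw [hψ1, hψw]
    · exact .inr (by ring)
    all_goals exact .inl (by ring)
  simpa [sq_eq_sq_iff_eq_or_eq_neg] using hvalues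

theorem powerWalsh_gold_mem (hL : Fintype.card L = 2 ^ (2 * k)) (hj : Even j)
    (hjk : j.Coprime k) (t : ℕ) (hψ : ψ ≠ 1) {γ : L} (hγ : γ ≠ 0) (δ : L) :
    powerWalsh ψ ((2 ^ j + 1) * 2 ^ t) γ δ ∈ ({0, 2 ^ (k + 1), -2 ^ (k + 1)} : Set ℤ) := by
  obtain ⟨m, hm, hfrob⟩ := exists_mulShift_sq_eq hψ
  obtain ⟨s, hs, hsγ⟩ := exists_pow_mul_two_pow_eq hL hj hjk t (mul_ne_zero (inv_ne_zero hγ) hm)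
  have hreduce : powerWalsh ψ ((2 ^ j + 1) * 2 ^ t) γ δ
      = powerWalsh (ψ.mulShift m) (2 ^ j + 1) 1 (m⁻¹ * (δ * s)) := by
    rw [← powerWalsh_mul_pow_mul hs, hsγ, mul_inv_cancel_left₀ hγ,
      ← powerWalsh_exponent_mul_two_pow hfrob _ t, powerWalsh_mulShift, mul_one,
      mul_inv_cancel_left₀ hm]
  rw [hreduce]
  exact powerWalsh_gold_one_mem hL hj hjk (AddChar.IsPrimitive.of_ne_one hψ hm) hfrob _

end PowerWalsh

instance {R : Type*} [Fintype R] (a b : R) : Fintype (QuadraticAlgebra R a b) :=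
  Fintype.ofEquiv _ (QuadraticAlgebra.equivProd a b).symm

section QuadraticAlgebraOneOne

variable {R : Type*} [CommRing R] [CharP R 2] {j t : ℕ}

theorem quadraticAlgebra_mk_sq (x y : R) :
    (⟨x, y⟩ : QuadraticAlgebra R 1 1) ^ 2 = ⟨x ^ 2 + y ^ 2, y ^ 2⟩ := by
  rw [sq, QuadraticAlgebra.mk_mul_mk]
  ext
  · ring
  · linear_combination x * y * CharTwo.two_eq_zero (R := R)

theorem quadraticAlgebra_mk_pow_two_pow (hj : Even j) (x y : R) :
    (⟨x, y⟩ : QuadraticAlgebra R 1 1) ^ 2 ^ j = ⟨x ^ 2 ^ j, y ^ 2 ^ j⟩ := by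
  obtain ⟨m, rfl⟩ := hj
  induction m generalizing x y with
  | zero => simp
  | succ m ih =>
    rw [show m + 1 + (m + 1) = 1 + 1 + (m + m) by ring, pow_add, pow_mul, pow_add, pow_mul,
      pow_one, quadraticAlgebra_mk_sq, quadraticAlgebra_mk_sq, CharTwo.add_sq,
      CharTwo.add_cancel_right, ih]
    simp only [pow_mul]

theorem quadraticAlgebra_mk_pow_gold (hj : Even j) (ht : Even t) (x y : R) :
    (⟨x, y⟩ : QuadraticAlgebra R 1 1) ^ ((2 ^ j + 1) * 2 ^ t)
      = ⟨x ^ ((2 ^ j + 1) * 2 ^ t) + y ^ ((2 ^ j + 1) * 2 ^ t),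
        (x + y) ^ ((2 ^ j + 1) * 2 ^ t) + x ^ ((2 ^ j + 1) * 2 ^ t)⟩ := by
  simp only [pow_mul, ← add_pow_char_pow _ _ 2 t]
  rw [pow_succ, quadraticAlgebra_mk_pow_two_pow hj, QuadraticAlgebra.mk_mul_mk,
    quadraticAlgebra_mk_pow_two_pow ht, pow_succ (x + y), add_pow_char_pow x y]
  congr 2
  · ring
  · linear_combination - (x ^ 2 ^ j * x) * CharTwo.two_eq_zero (R := R)

theorem sum_addChar_butterfly_eq_powerWalsh [Fintype R] (hj : Even j) (ht : Even t)
    (ψ : AddChar R ℤ) (a b c d : R) :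
    ∑ x, ∑ y, ψ (c * ((x + y) ^ ((2 ^ j + 1) * 2 ^ t) + x ^ ((2 ^ j + 1) * 2 ^ t))
        + d * ((x + y) ^ ((2 ^ j + 1) * 2 ^ t) + y ^ ((2 ^ j + 1) * 2 ^ t)) + a * x + b * y)
      = powerWalsh (ψ.compAddMonoidHom (QuadraticAlgebra.imₗ 1 1).toAddMonoidHom)
          ((2 ^ j + 1) * 2 ^ t) ⟨c, d⟩ ⟨a + b, a⟩ := by
  rw [← Fintype.sum_prod_type']
  refine Fintype.sum_equiv (QuadraticAlgebra.equivProd 1 1).symm _ _ fun ⟨x, y⟩ ↦ ?_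
  change _ = ψ ((⟨c, d⟩ * ⟨x, y⟩ ^ ((2 ^ j + 1) * 2 ^ t)
    + ⟨a + b, a⟩ * ⟨x, y⟩ : QuadraticAlgebra R 1 1).im)
  rw [quadraticAlgebra_mk_pow_gold hj ht]
  simp only [QuadraticAlgebra.im_add, QuadraticAlgebra.im_mul]
  congr 1
  linear_combination
    - (d * x ^ ((2 ^ j + 1) * 2 ^ t) + a * y) * CharTwo.two_eq_zero (R := R)

end QuadraticAlgebraOneOne

section Butterfly

variable {F : Type*} [Field F] [Fintype F] {i k : ℕ}

theorem pow_two_pow_mul_succ (hF : Fintype.card F = 2 ^ k) (n : ℕ) (x : F) :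
    x ^ 2 ^ (n * (k + 1)) = x ^ 2 ^ n := by
  rw [mul_add_one, add_comm, pow_add, pow_mul, mul_comm n k, pow_mul, ← hF,
    FiniteField.pow_card_pow]

theorem sq_ne_one_add_self_of_odd [CharP F 2] (hF : Fintype.card F = 2 ^ k) (hk : Odd k)
    (r : F) : r ^ 2 ≠ 1 + 1 * r := by
  intro hr
  rw [one_mul, add_comm] at hr
  have hr2 : r ^ 2 = r := by
    obtain ⟨m, rfl⟩ := hk
    have hcard : r ^ 2 ^ (2 * m + 1) = r := hF ▸ FiniteField.pow_card r
    rwa [pow_succ, pow_mul, pow_two_pow_eq_self_of_even (pow_four_eq_self_of_sq_eq_add_one hr)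
      (even_two_mul m)] at hcard
  exact one_ne_zero (left_eq_add.1 (hr2.symm.trans hr))

theorem closedButterfly_trivial_coeff_walsh_values_general (hF : Fintype.card F = 2 ^ k)
    (hk : Odd k) (hik : i.Coprime k) (t : ℕ) {ψ : AddChar F ℤ} (hψ : ψ ≠ 1) (a b : F) {c d : F}
    (hcd : (c, d) ≠ (0, 0)) :
    ∑ x, ∑ y, ψ (c * ((x + y) ^ ((2 ^ i + 1) * 2 ^ t) + x ^ ((2 ^ i + 1) * 2 ^ t))
        + d * ((x + y) ^ ((2 ^ i + 1) * 2 ^ t) + y ^ ((2 ^ i + 1) * 2 ^ t)) + a * x + b * y)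
      ∈ ({0, 2 ^ (k + 1), -2 ^ (k + 1)} : Set ℤ) := by
  have : CharP F 2 := charP_of_card_eq_prime_pow hF
  have heven (n : ℕ) : Even (n * (k + 1)) := hk.add_one.mul_left n
  have hexp (x : F) : x ^ ((2 ^ i + 1) * 2 ^ t)
      = x ^ ((2 ^ (i * (k + 1)) + 1) * 2 ^ (t * (k + 1))) := by
    simp only [pow_mul x, pow_succ, pow_two_pow_mul_succ hF]
  have : Fact (∀ r : F, r ^ 2 ≠ 1 + 1 * r) := ⟨sq_ne_one_add_self_of_odd hF hk⟩
  have : CharP (QuadraticAlgebra F 1 1) 2 :=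
    charP_of_injective_algebraMap QuadraticAlgebra.algebraMap_injective 2
  have hL : Fintype.card (QuadraticAlgebra F 1 1) = 2 ^ (2 * k) := by
    rw [Fintype.ofEquiv_card, Fintype.card_prod, hF]
    ring
  have hcop : (i * (k + 1)).Coprime k := hik.mul_left (by simp)
  simp only [hexp]
  rw [sum_addChar_butterfly_eq_powerWalsh (heven i) (heven t)]
  refine powerWalsh_gold_mem hL (heven i) hcop _ ?_ ?_ _
  · obtain ⟨x, hx⟩ := AddChar.ne_one_iff.1 hψ
    exact AddChar.ne_one_iff.2 ⟨⟨0, x⟩, hx⟩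
  · intro h
    exact hcd (congrArg (QuadraticAlgebra.equivProd 1 1) h)

end Butterfly

/-- The additive character `x ↦ (-1) ^ Tr x` of `GaloisField 2 k`, with `Tr` the trace map to
`ZMod 2`. -/
noncomputable def traceChar (k : ℕ) : AddChar (GaloisField 2 k) ℤ :=
  (AddChar.zmodChar 2 (neg_one_sq (R := ℤ))).compAddMonoidHom
    (Algebra.trace (ZMod 2) (GaloisField 2 k)).toAddMonoidHom

theorem traceChar_ne_one (k : ℕ) : traceChar k ≠ 1 := by
  obtain ⟨x, hx⟩ := Algebra.trace_surjective (ZMod 2) (GaloisField 2 k) 1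
  refine AddChar.ne_one_iff.2 ⟨x, ?_⟩
  simp [traceChar, hx, AddChar.zmodChar_apply, ZMod.val_one]

theorem absTrace_eq_algebraMap_trace {k : ℕ} (hk : k ≠ 0) (x : GaloisField 2 k) :
    absTrace k x = algebraMap (ZMod 2) _ (Algebra.trace (ZMod 2) (GaloisField 2 k) x) := by
  rw [FiniteField.algebraMap_trace_eq_sum_pow, GaloisField.finrank 2 hk, Nat.card_zmod, absTrace]

theorem traceChar_apply {k : ℕ} (hk : k ≠ 0) (x : GaloisField 2 k) [Decidable (absTrace k x = 0)] :
    traceChar k x = if absTrace k x = 0 then 1 else -1 := by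
  have hvalue (z : ZMod 2) : (-1 : ℤ) ^ z.val = if z = 0 then 1 else -1 := by
    revert z; decide
  simp only [absTrace_eq_algebraMap_trace hk, map_eq_zero]
  exact hvalue _

theorem butterflyWalshOne_eq_sum_traceChar {k : ℕ} (hk : k ≠ 0) (e : ℕ)
    (a b c d : GaloisField 2 k) :
    butterflyWalshOne k e a b c d = ∑ x, ∑ y, traceChar k
      (c * ((x + y) ^ e + x ^ e) + d * ((x + y) ^ e + y ^ e) + a * x + b * y) := by
  classical
  simp only [butterflyWalshOne, traceChar_apply hk]

/-- Every Walsh transform value of the closed butterfly with trivial coefficient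
`α = 1`, `k` odd, `gcd(i,k) = 1` and exponent `e = (2^i+1)·2^t` lies in
`{0, ±2^(k+1)}`. -/
theorem closedButterfly_trivial_coeff_walsh_values (k i t : ℕ) (hk : Odd k)
    (hkpos : 0 < k) (hipos : 0 < i) (hgcd : Nat.gcd i k = 1) (ht : t ≤ k - 1)
    (a b c d : GaloisField 2 k) (hcd : (c, d) ≠ (0, 0)) :
    butterflyWalshOne k ((2 ^ i + 1) * 2 ^ t) a b c d
      ∈ ({0, 2 ^ (k + 1), -2 ^ (k + 1)} : Set ℤ) := by
  rw [butterflyWalshOne_eq_sum_traceChar hkpos.ne']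
  exact closedButterfly_trivial_coeff_walsh_values_general
    (Nat.card_eq_fintype_card.symm.trans (GaloisField.card 2 k hkpos.ne')) hk hgcd t
    (traceChar_ne_one k) a b hcd
end
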